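/- arXiv:1512.08345 — 3 statements merged into one kernel-verified Lean document; each statement's English description precedes it below -/
import Mathlib

section
/- Parameter specialization identity: for nonnegative integers k, ℓ and real parameters μ_1, μ_2, ∑_{|α|=k+ℓ+3} ∑_{a_1+a_2+a_3=k} (μ_1^{a_1}+μ_2^{a_1})(μ_1+μ_2)^{a_2}(μ_1^{a_3}+μ_2^{a_3}) · 2^{α_{a_1+1}+⋯+α_{a_1+a_2+1}-1-a_2} (1 - 2^{1-α_{a_1+a_2+1}}) · ζ(α_0, α_1, ..., α_{k+1}+1) = (ℓ+1)·ζ(k+ℓ+4)·∑_{a_1+a_2=k} μ_1^{a_1} μ_2^{a_2}. -/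
open Finset

/-- Multiple zeta value `ζ(α₀,…,α_{n-1}) = ∑_{0<ℓ₀<⋯<ℓ_{n-1}} ∏ ℓᵢ^{-αᵢ}`. -/
noncomputable def mzv {n : ℕ} (α : Fin n → ℕ) : ℝ :=
  ∑' ℓ : {ℓ : Fin n → ℕ // StrictMono ℓ ∧ ∀ i, 0 < ℓ i},
    ∏ i, ((ℓ.1 i : ℝ) ^ (α i))⁻¹

/-- Compositions of `m` into `n` positive parts. -/
def Comp (n m : ℕ) : Type := {v : Fin n → ℕ // (∀ i, 0 < v i) ∧ ∑ i, v i = m}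

/-- Increase the last entry of a tuple by one. -/
def incLast {n : ℕ} (v : Fin n → ℕ) : Fin n → ℕ :=
  fun i => if (i : ℕ) = n - 1 then v i + 1 else v i

/-- Extend a tuple on `Fin n` to `ℕ` by zero. -/
def ext {n : ℕ} (v : Fin n → ℕ) : ℕ → ℕ :=
  fun r => if h : r < n then v ⟨r, h⟩ else 0

/-!
Fix `a₁ + a₂ + a₃ = k` and put the inner sums over `α` of weight `k + ℓ + 3` into a generating
function with `x ^ (ℓ + 1)`. Geometric series in each entry of `α` turn it into `x` times a nested
sum with factors `1 / (n - x)` outside the block `a₁ + 1, …, a₁ + a₂ + 1` and `1 / (n - 2 x)` inside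
it. This nested sum is the value at `1` of a power series in `X` obtained by iterating
`f ↦ (θ - c)⁻¹ (X / (1 - X) * f)`, with `θ` the Euler operator and `c = x` or `c = 2 x`. The Leibniz
rule for `θ` on a product of two such series is the shuffle product: the shifts `x` add up to
`2 x`, and the choices made at each step account for `(μ₁ + μ₂) ^ a₂` and for the two sums
`μ₁ ^ a + μ₂ ^ a`.

Connected sums with the connector `(1 - x)ₙ (1 - x)ₘ / (1 - x)ₙ₊ₘ` evaluate the factors of that
product, and part of its shuffle expansion, as sums in the numbers `1 / (q - x)` and `1 / q`. The
stuffle product of the same factors has the same depth-two terms, so the rest of the shuffle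
expansion must equal the diagonal term `∑ 1 / ((q - x) ^ 2 * q ^ (k + 2))`, which depends only on
`k` and whose expansion in `x` has the coefficients `(ℓ + 1) * ζ(k + ℓ + 4)`.
-/

namespace MultipleZeta

section ENNRealSums

open scoped ENNReal

/-- The sum of `u q` over all `q > m`, as a function of `m`. -/
noncomputable def tailSum (u : ℕ → ℝ≥0∞) (m : ℕ) : ℝ≥0∞ := ∑' j, u (m + 1 + j)

theorem tailSum_eq_tsum_ite (u : ℕ → ℝ≥0∞) (m : ℕ) :
    tailSum u m = ∑' q, if m < q then u q else 0 := by
  have initial : ∑ q ∈ range (m + 1), (if m < q then u q else 0) = 0 :=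
    sum_eq_zero fun q hq => if_neg (by have := mem_range.1 hq; omega)
  rw [← Summable.sum_add_tsum_nat_add' (k := m + 1) ENNReal.summable, initial, zero_add]
  exact tsum_congr fun j => by rw [if_pos (by omega), add_comm]

theorem tailSum_zero (u : ℕ → ℝ≥0∞) : tailSum u 0 = ∑' q, u (q + 1) :=
  tsum_congr fun q => by rw [zero_add, add_comm]

theorem tailSum_congr {u v : ℕ → ℝ≥0∞} {m : ℕ} (h : ∀ q, m < q → u q = v q) :
    tailSum u m = tailSum v m :=
  tsum_congr fun j => h _ (by omega)

theorem tailSum_const_mul (a : ℝ≥0∞) (u : ℕ → ℝ≥0∞) (m : ℕ) :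
    tailSum (fun q => a * u q) m = a * tailSum u m :=
  ENNReal.tsum_mul_left

theorem tailSum_tsum {ι : Type*} (u : ι → ℕ → ℝ≥0∞) (m : ℕ) :
    tailSum (fun q => ∑' i, u i q) m = ∑' i, tailSum (u i) m :=
  ENNReal.tsum_comm

theorem tsum_sum_range_eq_tsum_tailSum (F : ℕ → ℕ → ℝ≥0∞) :
    ∑' q, ∑ m ∈ range q, F m q = ∑' m, tailSum (F m) m := by
  simp_rw [tailSum_eq_tsum_ite]
  rw [ENNReal.tsum_comm]
  refine tsum_congr fun q => ?_
  rw [tsum_eq_sum (s := range q) fun m hm => if_neg (by simpa using hm)]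
  exact sum_congr rfl fun m hm => (if_pos (mem_range.1 hm)).symm

theorem tailSum_mul_tailSum (u v : ℕ → ℝ≥0∞) (m : ℕ) :
    tailSum u m * tailSum v m =
      tailSum (u * tailSum v) m + tailSum (v * tailSum u) m + tailSum (u * v) m := by
  have tailSum_mul (u v : ℕ → ℝ≥0∞) : tailSum (u * tailSum v) m =
      ∑' p, ∑' q, if m < p ∧ p < q then u p * v q else 0 := by
    simp only [tailSum_eq_tsum_ite, Pi.mul_apply, ← ENNReal.tsum_mul_left, mul_ite, mul_zero,
      ite_and]
    exact tsum_congr fun p => by split_ifs <;> simp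
  have diagonal : tailSum (u * v) m =
      ∑' p, ∑' q, if m < p ∧ q = p then u p * v q else 0 := by
    simp only [tailSum_eq_tsum_ite, Pi.mul_apply, ite_and]
    exact tsum_congr fun p => by split_ifs <;> simp
  rw [tailSum_mul, tailSum_mul, ENNReal.tsum_comm (f := fun p q => ite _ (v p * u q) 0), diagonal,
    tailSum_eq_tsum_ite, tailSum_eq_tsum_ite, ← ENNReal.tsum_mul_right]
  simp_rw [← ENNReal.tsum_mul_left, ← ENNReal.tsum_add]
  refine tsum_congr fun p => tsum_congr fun q => ?_
  split_ifs <;> first | omega | simp [mul_comm]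

theorem tsum_mul_tsum_eq_tsum_sum_antidiagonal (u v : ℕ → ℝ≥0∞) :
    (∑' n, u n) * ∑' n, v n = ∑' n, ∑ p ∈ antidiagonal n, u p.1 * v p.2 := by
  simp_rw [← ENNReal.tsum_mul_right, ← ENNReal.tsum_mul_left]
  rw [← ENNReal.tsum_prod (f := fun i j => u i * v j),
    ← HasAntidiagonal.sigmaAntidiagonalEquivProd.tsum_eq, ENNReal.tsum_sigma']
  exact tsum_congr fun n => Finset.tsum_subtype (antidiagonal n) fun p => u p.1 * v p.2

theorem tsum_prod_eq_prod_tsum {ι : Type*} {n : ℕ} (g : Fin n → ι → ℝ≥0∞) :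
    ∑' α : Fin n → ι, ∏ i, g i (α i) = ∏ i, ∑' t, g i t := by
  induction n with
  | zero => simp
  | succ n ih =>
    rw [← (Fin.consEquiv fun _ => ι).tsum_eq, ENNReal.tsum_prod', Fin.prod_univ_succ, ← ih,
      ← ENNReal.tsum_mul_right]
    simp [Fin.prod_univ_succ, ENNReal.tsum_mul_left]

end ENNRealSums

section NestedSums

open scoped ENNReal

/-- The nested sum `∑ w 0 (v 0) ⋯ w (n-1) (v (n-1)) * g (v (n-1))` over `m < v 0 < ⋯ < v (n-1)`,
by recursion on the smallest index; for `n = 0` the innermost factor is evaluated at `m`. -/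
noncomputable def nestedSum (g : ℕ → ℝ≥0∞) : (ℕ → ℕ → ℝ≥0∞) → ℕ → ℕ → ℝ≥0∞
  | _, 0 => g
  | w, n + 1 => tailSum (w 0 * nestedSum g (fun r => w (r + 1)) n)

open Classical in
theorem nestedSum_eq_tsum_ite (g : ℕ → ℝ≥0∞) (w : ℕ → ℕ → ℝ≥0∞) (n m : ℕ) :
    nestedSum g w n m = ∑' v : Fin n → ℕ,
      if StrictMono (Matrix.vecCons m v) then
        (∏ i : Fin n, w i (v i)) * g (Matrix.vecCons m v (Fin.last n)) else 0 := by
  induction n generalizing w m with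
  | zero => simp [nestedSum, Subsingleton.strictMono]
  | succ n ih =>
    rw [nestedSum, tailSum_eq_tsum_ite, ← (Fin.consEquiv fun _ => ℕ).tsum_eq, ENNReal.tsum_prod']
    refine tsum_congr fun q => ?_
    simp only [Pi.mul_apply, ih, ← ENNReal.tsum_mul_left, Fin.consEquiv_apply]
    change _ = ∑' v : Fin n → ℕ, if StrictMono (Matrix.vecCons m (Matrix.vecCons q v)) then
      (∏ i : Fin (n + 1), w i (Matrix.vecCons q v i)) *
        g (Matrix.vecCons m (Matrix.vecCons q v) (Fin.last n).succ) else 0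
    simp only [strictMono_vecCons, Matrix.cons_val_zero, ite_and, Fin.prod_univ_succ,
      Matrix.cons_val_succ, Fin.val_zero, Fin.val_succ]
    split_ifs <;> simp [mul_assoc]

theorem nestedSum_succ_zero (g : ℕ → ℝ≥0∞) (w : ℕ → ℕ → ℝ≥0∞) (n : ℕ) :
    nestedSum g w (n + 1) 0 = ∑' v : {v : Fin (n + 1) → ℕ // StrictMono v ∧ ∀ i, 0 < v i},
      (∏ i : Fin (n + 1), w i (v.1 i)) * g (v.1 (Fin.last n)) := by
  classical
  rw [nestedSum_eq_tsum_ite]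
  refine .trans ?_ (tsum_subtype {v : Fin (n + 1) → ℕ | StrictMono v ∧ ∀ i, 0 < v i}
    fun v => (∏ i : Fin (n + 1), w i (v i)) * g (v (Fin.last n))).symm
  refine tsum_congr fun v => ?_
  have positivity_iff : StrictMono v ∧ (∀ i, 0 < v i) ↔ StrictMono (Matrix.vecCons 0 v) := by
    rw [and_comm]; exact Fin.strictMono_cons.symm
  simp only [Set.indicator_apply, Set.mem_ofPred_eq, positivity_iff]
  rfl

end NestedSums

section AntidiagonalSums

variable {R M : Type*} [CommSemiring R] [AddCommMonoid M] [Module R M]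

theorem sum_antidiagonal_antidiagonal_fst (F : ℕ → ℕ → ℕ → M) (k : ℕ) :
    ∑ a ∈ antidiagonal k, ∑ b ∈ antidiagonal a.1, F b.1 b.2 a.2 =
      ∑ a ∈ antidiagonal k, ∑ b ∈ antidiagonal a.2, F a.1 b.1 b.2 := by
  rw [sum_sigma', sum_sigma']
  refine sum_nbij' (fun p => ⟨(p.2.1, p.2.2 + p.1.2), (p.2.2, p.1.2)⟩)
    (fun p => ⟨(p.1.1 + p.2.1, p.2.2), (p.1.1, p.2.1)⟩) ?_ ?_ ?_ ?_ fun _ _ => rfl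
  all_goals
    rintro ⟨⟨a, b⟩, c, d⟩ h
    simp only [mem_sigma, HasAntidiagonal.mem_antidiagonal] at h ⊢
    obtain ⟨rfl, rfl⟩ := h
  · exact ⟨(add_assoc ..).symm, trivial⟩
  · exact ⟨add_assoc .., trivial⟩
  · rfl
  · rfl

theorem eq_sum_antidiagonal_pow_of_succ (L : Module.End R M) {s u : ℕ → M} (zero : s 0 = u 0)
    (succ : ∀ k, s (k + 1) = L (s k) + u (k + 1)) (k : ℕ) :
    s k = ∑ a ∈ antidiagonal k, (L ^ a.2) (u a.1) := by
  induction k with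
  | zero => simpa using zero
  | succ k ih => simp [succ, ih, Nat.sum_antidiagonal_succ', pow_succ', add_comm]

/-- The homogeneous sum `∑ s ^ a * t ^ b • F a b` over `a + b = k`. -/
def homogSum (s t : R) (F : ℕ → ℕ → M) (k : ℕ) : M :=
  ∑ a ∈ antidiagonal k, (s ^ a.1 * t ^ a.2) • F a.1 a.2

theorem homogSum_swap (s t : R) (F : ℕ → ℕ → M) (k : ℕ) :
    homogSum t s (fun a b => F b a) k = homogSum s t F k := by
  rw [homogSum, ← Nat.sum_antidiagonal_swap]
  simp only [homogSum, Prod.fst_swap, Prod.snd_swap, mul_comm]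

theorem homogSum_add (s t : R) (F G : ℕ → ℕ → M) (k : ℕ) :
    homogSum s t (fun a b => F a b + G a b) k = homogSum s t F k + homogSum s t G k := by
  simp only [homogSum, smul_add, sum_add_distrib]

theorem homogSum_map (L : Module.End R M) (s t : R) (F : ℕ → ℕ → M) (k : ℕ) :
    homogSum s t (fun a b => L (F a b)) k = L (homogSum s t F k) := by
  simp only [homogSum, map_sum, map_smul]

theorem homogSum_zero (s t : R) (F : ℕ → ℕ → M) : homogSum s t F 0 = F 0 0 := by
  simp [homogSum]

theorem homogSum_succ (s t : R) (F : ℕ → ℕ → M) (k : ℕ) :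
    homogSum s t F (k + 1) =
      t ^ (k + 1) • F 0 (k + 1) + s • homogSum s t (fun a b => F (a + 1) b) k := by
  simp only [homogSum, Nat.sum_antidiagonal_succ, smul_sum, smul_smul, pow_zero, one_mul]
  simp only [pow_succ', mul_assoc]

theorem homogSum_succ' (s t : R) (F : ℕ → ℕ → M) (k : ℕ) :
    homogSum s t F (k + 1) =
      s ^ (k + 1) • F (k + 1) 0 + t • homogSum s t (fun a b => F a (b + 1)) k := by
  rw [← homogSum_swap, homogSum_succ, homogSum_swap s t fun a b => F a (b + 1)]

end AntidiagonalSums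

section EulerOperator

open PowerSeries

variable {K : Type*} [Field K]

/-- The Euler operator `X * d/dX`. -/
noncomputable def eulerOp : Derivation K K⟦X⟧ K⟦X⟧ := (X : K⟦X⟧) • derivative K

theorem coeff_eulerOp (f : K⟦X⟧) (n : ℕ) : coeff n (eulerOp f) = n * coeff n f := by
  cases n with
  | zero => simp [eulerOp]
  | succ n => simp [eulerOp, coeff_succ_X_mul, coeff_derivative, mul_comm]

/-- The inverse of `eulerOp - c`: it divides the `n`-th coefficient by `n - c`. A coefficient with
`n = c` is sent to zero, by the convention on division by zero. -/
noncomputable def eulerResolvent (c : K) : Module.End K K⟦X⟧ where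
  toFun f := PowerSeries.mk fun n => coeff n f / (n - c)
  map_add' f g := by ext n; simp [add_div]
  map_smul' r f := by ext n; simp [mul_div_assoc]

theorem coeff_eulerResolvent (c : K) (f : K⟦X⟧) (n : ℕ) :
    coeff n (eulerResolvent c f) = coeff n f / (n - c) := by
  simp [eulerResolvent]

theorem eq_eulerResolvent_iff {c : K} (hc : ∀ n : ℕ, (n : K) ≠ c) {f g : K⟦X⟧} :
    g = eulerResolvent c f ↔ eulerOp g = c • g + f := by
  simp only [PowerSeries.ext_iff, coeff_eulerResolvent, coeff_eulerOp, map_add, coeff_smul,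
    eq_div_iff (sub_ne_zero.2 (hc _))]
  refine forall_congr' fun n => ?_
  rw [← sub_eq_iff_eq_add', smul_eq_mul, ← sub_mul, mul_comm]

theorem eulerOp_eulerResolvent_zero [CharZero K] {f : K⟦X⟧} (hf : coeff 0 f = 0) :
    eulerOp (eulerResolvent 0 f) = f := by
  ext n
  rcases eq_or_ne n 0 with rfl | hn
  · simp [coeff_eulerOp, hf]
  · rw [coeff_eulerOp, coeff_eulerResolvent, sub_zero, mul_div_cancel₀ _ (Nat.cast_ne_zero.2 hn)]

theorem eulerResolvent_zero_eulerOp [CharZero K] {f : K⟦X⟧} (hf : coeff 0 f = 0) :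
    eulerResolvent 0 (eulerOp f) = f := by
  ext n
  rcases eq_or_ne n 0 with rfl | hn
  · simp [coeff_eulerResolvent, hf]
  · rw [coeff_eulerResolvent, coeff_eulerOp, sub_zero,
      mul_div_cancel_left₀ _ (Nat.cast_ne_zero.2 hn)]

/-- The operator `f ↦ (eulerOp - c)⁻¹ (X / (1 - X) * f)`. It replaces the `n`-th coefficient by the
sum of the coefficients of index less than `n`, divided by `n - c`. -/
noncomputable def strictSum (c : K) : Module.End K K⟦X⟧ :=
  eulerResolvent c ∘ₗ LinearMap.mulLeft K (X * PowerSeries.mk 1)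

theorem strictSum_apply (c : K) (f : K⟦X⟧) :
    strictSum c f = eulerResolvent c (X * PowerSeries.mk 1 * f) := rfl

theorem coeff_strictSum (c : K) (f : K⟦X⟧) (n : ℕ) :
    coeff n (strictSum c f) = (∑ m ∈ range n, coeff m f) / (n - c) := by
  rw [strictSum_apply, coeff_eulerResolvent, mul_assoc]
  cases n with
  | zero => simp
  | succ n =>
    rw [coeff_succ_X_mul, mul_comm, coeff_mul, Nat.sum_antidiagonal_eq_sum_range_succ_mk]
    simp

theorem coeff_zero_strictSum (c : K) (f : K⟦X⟧) : coeff 0 (strictSum c f) = 0 := by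
  simp [coeff_strictSum]

theorem coeff_zero_strictSum_pow {c : K} {f : K⟦X⟧} (hf : coeff 0 f = 0) (b : ℕ) :
    coeff 0 ((strictSum c ^ b) f) = 0 := by
  cases b with
  | zero => exact hf
  | succ b => rw [pow_succ', Module.End.mul_apply, coeff_zero_strictSum]

theorem eulerOp_strictSum {c : K} (hc : ∀ n : ℕ, (n : K) ≠ c) (f : K⟦X⟧) :
    eulerOp (strictSum c f) = c • strictSum c f + X * PowerSeries.mk 1 * f :=
  (eq_eulerResolvent_iff hc).1 rfl

/-- The generating series of `a` nested strict sums with denominators `n - c`. -/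
noncomputable def chain (c : K) (a : ℕ) : K⟦X⟧ := (strictSum c ^ a) 1

theorem chain_zero (c : K) : chain c 0 = 1 := rfl

theorem chain_succ (c : K) (a : ℕ) : chain c (a + 1) = strictSum c (chain c a) := by
  rw [chain, pow_succ', Module.End.mul_apply, chain]

theorem chain_succ_mul_chain_succ {c : K} (hc : ∀ n : ℕ, (n : K) ≠ c)
    (hc2 : ∀ n : ℕ, (n : K) ≠ 2 * c) (a b : ℕ) :
    chain c (a + 1) * chain c (b + 1) =
      strictSum (2 * c) (chain c a * chain c (b + 1) + chain c (a + 1) * chain c b) := by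
  rw [strictSum_apply, eq_eulerResolvent_iff hc2, Derivation.leibniz]
  simp only [chain_succ, eulerOp_strictSum hc, smul_eq_mul, smul_eq_C_mul, map_mul, map_ofNat]
  ring

/-- The part of `p * chain c b` that remains after all `b` strict sums have been applied to `p`
alone, where `q` is the Euler derivative of `p`; see `mul_chain`. -/
noncomputable def shuffleRemainder (c : K) (q : K⟦X⟧) : ℕ → K⟦X⟧
  | 0 => 0
  | b + 1 => strictSum c (shuffleRemainder c q b) + eulerResolvent c (q * chain c (b + 1))

theorem mul_chain {c : K} (hc : ∀ n : ℕ, (n : K) ≠ c) (p : K⟦X⟧) (b : ℕ) :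
    p * chain c b = (strictSum c ^ b) p + shuffleRemainder c (eulerOp p) b := by
  induction b with
  | zero => simp [shuffleRemainder, chain_zero]
  | succ b ih =>
    rw [pow_succ', Module.End.mul_apply, shuffleRemainder, ← add_assoc, ← map_add, ← ih,
      strictSum_apply, ← map_add, eq_eulerResolvent_iff hc, Derivation.leibniz, chain_succ,
      eulerOp_strictSum hc]
    simp only [smul_eq_mul, smul_eq_C_mul]
    ring

/-- The generating series of `a` nested strict sums with denominators `n - c` followed by a
division by `n`. -/
noncomputable def closedChain (c : K) (a : ℕ) : K⟦X⟧ := eulerResolvent 0 (chain c a)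

theorem eulerOp_closedChain_succ [CharZero K] (c : K) (a : ℕ) :
    eulerOp (closedChain c (a + 1)) = chain c (a + 1) :=
  eulerOp_eulerResolvent_zero (by rw [chain_succ, coeff_zero_strictSum])

theorem coeff_zero_closedChain (c : K) (a : ℕ) : coeff 0 (closedChain c a) = 0 := by
  simp [closedChain, coeff_eulerResolvent]

theorem closedChain_succ_mul_closedChain_succ [CharZero K] {c : K} (hc : ∀ n : ℕ, (n : K) ≠ c)
    (a b : ℕ) :
    closedChain c (a + 1) * closedChain c (b + 1) =
      eulerResolvent 0 ((strictSum c ^ (b + 1)) (closedChain c (a + 1))) +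
      eulerResolvent 0 ((strictSum c ^ (a + 1)) (closedChain c (b + 1))) +
      eulerResolvent 0 (shuffleRemainder c (chain c (a + 1)) (b + 1) +
        shuffleRemainder c (chain c (b + 1)) (a + 1)) := by
  have expand (a b : ℕ) : closedChain c (a + 1) * chain c (b + 1) =
      (strictSum c ^ (b + 1)) (closedChain c (a + 1)) +
        shuffleRemainder c (chain c (a + 1)) (b + 1) := by
    rw [mul_chain hc, eulerOp_closedChain_succ]
  rw [← eulerResolvent_zero_eulerOp (f := closedChain c (a + 1) * _)
    (by simp [coeff_mul, coeff_zero_closedChain]), Derivation.leibniz, eulerOp_closedChain_succ,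
    eulerOp_closedChain_succ, smul_eq_mul, smul_eq_mul, expand, expand, ← map_add, ← map_add]
  congr 1
  abel

/-- The generating series of nested strict sums with denominators `n - c` (`a₁ + 1` times), then
`n - 2 * c` (`a₂ + 1` times, the last index being divided by `n - c` as well), then `n - c`
(`a₃` times). -/
noncomputable def blockChain (c : K) (a₁ a₂ a₃ : ℕ) : K⟦X⟧ :=
  (strictSum c ^ a₃) (eulerResolvent c ((strictSum (2 * c) ^ (a₂ + 1)) (chain c (a₁ + 1))))

theorem homogSum_chain_mul_chain {c : K} (hc : ∀ n : ℕ, (n : K) ≠ c)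
    (hc2 : ∀ n : ℕ, (n : K) ≠ 2 * c) (s t : K) (k : ℕ) :
    homogSum s t (fun a b => chain c (a + 1) * chain c (b + 1)) k =
      ∑ a ∈ antidiagonal k, ((s ^ a.1 + t ^ a.1) * (s + t) ^ a.2) •
        (strictSum (2 * c) ^ (a.2 + 1)) (chain c (a.1 + 1)) := by
  refine (eq_sum_antidiagonal_pow_of_succ ((s + t) • strictSum (2 * c))
    (u := fun k => (s ^ k + t ^ k) • strictSum (2 * c) (chain c (k + 1))) ?zero ?succ k).trans ?_
  case zero =>
    rw [homogSum_zero, chain_succ_mul_chain_succ hc hc2, chain_zero, one_mul, mul_one, pow_zero,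
      pow_zero, add_smul, one_smul, map_add]
  case succ =>
    intro k
    simp only [chain_succ_mul_chain_succ hc hc2, homogSum_map]
    rw [homogSum_add, homogSum_succ, homogSum_succ' (F := fun a b => chain c (a + 1) * chain c b)]
    simp only [chain_zero, map_add, map_smul, LinearMap.smul_apply, one_mul, mul_one]
    simp only [← homogSum_map, ← chain_succ_mul_chain_succ hc hc2]
    module
  simp only [smul_pow, pow_succ, Module.End.mul_apply, LinearMap.smul_apply, map_smul, smul_smul,
    mul_comm]

theorem homogSum_shuffleRemainder {c : K} (hc : ∀ n : ℕ, (n : K) ≠ c)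
    (hc2 : ∀ n : ℕ, (n : K) ≠ 2 * c) (s t : K) (k : ℕ) :
    homogSum s t (fun a b => shuffleRemainder c (chain c (a + 1)) (b + 1)) k =
      ∑ a ∈ antidiagonal k, ∑ b ∈ antidiagonal a.2,
        ((s ^ a.1 + t ^ a.1) * (s + t) ^ b.1 * t ^ b.2) • blockChain c a.1 b.1 b.2 := by
  refine (eq_sum_antidiagonal_pow_of_succ (t • strictSum c) (u := fun k => eulerResolvent c
    (homogSum s t (fun a b => chain c (a + 1) * chain c (b + 1)) k)) ?zero ?succ k).trans ?_
  case zero => simp [homogSum_zero, shuffleRemainder]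
  case succ =>
    intro k
    conv_lhs => simp only [shuffleRemainder, homogSum_add, homogSum_map]
    rw [homogSum_succ' (F := fun a => shuffleRemainder c (chain c (a + 1)))]
    simp [shuffleRemainder]
  rw [← sum_antidiagonal_antidiagonal_fst fun a₁ a₂ a₃ =>
    ((s ^ a₁ + t ^ a₁) * (s + t) ^ a₂ * t ^ a₃) • blockChain c a₁ a₂ a₃]
  simp only [homogSum_chain_mul_chain hc hc2, map_sum, map_smul, smul_pow, LinearMap.smul_apply,
    smul_smul, blockChain, mul_comm]

theorem homogSum_shuffleRemainder_add_swap {c : K} (hc : ∀ n : ℕ, (n : K) ≠ c)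
    (hc2 : ∀ n : ℕ, (n : K) ≠ 2 * c) (s t : K) (k : ℕ) :
    homogSum s t (fun a b => shuffleRemainder c (chain c (a + 1)) (b + 1) +
        shuffleRemainder c (chain c (b + 1)) (a + 1)) k =
      ∑ a ∈ antidiagonal k, ∑ b ∈ antidiagonal a.2,
        ((s ^ a.1 + t ^ a.1) * (s + t) ^ b.1 * (s ^ b.2 + t ^ b.2)) •
          blockChain c a.1 b.1 b.2 := by
  rw [homogSum_add, ← homogSum_swap s t fun a b => shuffleRemainder c (chain c (b + 1)) (a + 1),
    homogSum_shuffleRemainder hc hc2, homogSum_shuffleRemainder hc hc2, ← sum_add_distrib]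
  refine sum_congr rfl fun a _ => ?_
  rw [← sum_add_distrib]
  refine sum_congr rfl fun b _ => ?_
  module

end EulerOperator

section Positivity

open PowerSeries

/-- All coefficients of a real power series are nonnegative. -/
def CoeffNonneg (f : ℝ⟦X⟧) : Prop := ∀ n, 0 ≤ coeff n f

namespace CoeffNonneg

variable {f g : ℝ⟦X⟧} {c : ℝ}

theorem one : CoeffNonneg 1 := fun n => by
  rw [coeff_one]; split_ifs <;> norm_num

theorem add (hf : CoeffNonneg f) (hg : CoeffNonneg g) : CoeffNonneg (f + g) := fun n => by
  rw [map_add]; exact add_nonneg (hf n) (hg n)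

theorem mul (hf : CoeffNonneg f) (hg : CoeffNonneg g) : CoeffNonneg (f * g) := fun n => by
  rw [coeff_mul]; exact sum_nonneg fun p _ => mul_nonneg (hf _) (hg _)

theorem eulerResolvent (hf : CoeffNonneg f) (hc : ∀ n : ℕ, coeff n f ≠ 0 → c ≤ n) :
    CoeffNonneg (eulerResolvent c f) := fun n => by
  rw [coeff_eulerResolvent]
  rcases eq_or_ne (coeff n f) 0 with h | h
  · rw [h, zero_div]
  · exact div_nonneg (hf n) (sub_nonneg.2 (hc n h))

theorem eulerResolvent_zero (hf : CoeffNonneg f) : CoeffNonneg (MultipleZeta.eulerResolvent 0 f) :=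
  hf.eulerResolvent fun n _ => n.cast_nonneg

theorem eulerResolvent_of_lt_one (hf : CoeffNonneg f) (hc : c < 1) (h0 : coeff 0 f = 0) :
    CoeffNonneg (MultipleZeta.eulerResolvent c f) := by
  refine hf.eulerResolvent fun n hn => hc.le.trans ?_
  exact Nat.one_le_cast.2 (Nat.one_le_iff_ne_zero.2 fun h => hn (h ▸ h0))

theorem strictSum (hf : CoeffNonneg f) (hc : c < 1) : CoeffNonneg (strictSum c f) := by
  rw [strictSum_apply]
  refine .eulerResolvent_of_lt_one (.mul (fun n => ?_) hf) hc (by simp [mul_assoc])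
  cases n <;> simp [coeff_succ_X_mul]

theorem strictSum_pow (hf : CoeffNonneg f) (hc : c < 1) (b : ℕ) :
    CoeffNonneg ((MultipleZeta.strictSum c ^ b) f) := by
  induction b with
  | zero => exact hf
  | succ b ih => rw [pow_succ', Module.End.mul_apply]; exact ih.strictSum hc

theorem chain (hc : c < 1) (a : ℕ) : CoeffNonneg (chain c a) :=
  one.strictSum_pow hc a

theorem closedChain (hc : c < 1) (a : ℕ) : CoeffNonneg (closedChain c a) :=
  (chain hc a).eulerResolvent_zero

theorem shuffleRemainder (hf : CoeffNonneg f) (hc : c < 1) (b : ℕ) :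
    CoeffNonneg (shuffleRemainder c f b) := by
  induction b with
  | zero => exact fun _ => le_rfl
  | succ b ih =>
    refine (ih.strictSum hc).add ((hf.mul (chain hc _)).eulerResolvent_of_lt_one hc ?_)
    simp [-coeff_zero_eq_constantCoeff, coeff_mul, chain_succ, coeff_zero_strictSum]

theorem blockChain (hc : c < 1) (hc2 : 2 * c < 1) (a₁ a₂ a₃ : ℕ) :
    CoeffNonneg (blockChain c a₁ a₂ a₃) := by
  refine .strictSum_pow (.eulerResolvent_of_lt_one ((chain hc _).strictSum_pow hc2 _) hc ?_) hc _
  rw [pow_succ', Module.End.mul_apply, coeff_zero_strictSum]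

end CoeffNonneg

end Positivity

section Pairing

open PowerSeries
open scoped ENNReal

/-- The sum `∑ m, fₘ * T m`, where `fₘ` are the coefficients of `f`; negative coefficients are
truncated to zero. -/
noncomputable def pairing (T : ℕ → ℝ≥0∞) (f : ℝ⟦X⟧) : ℝ≥0∞ :=
  ∑' m, ENNReal.ofReal (coeff m f) * T m

/-- The reciprocal `1 / (n - c)`, truncated to zero for `n ≤ c`. -/
noncomputable def invSub (c : ℝ) (n : ℕ) : ℝ≥0∞ := ENNReal.ofReal (1 / (n - c))

variable {f g : ℝ⟦X⟧}

theorem pairing_one_right (T : ℕ → ℝ≥0∞) : pairing T 1 = T 0 := by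
  rw [pairing, tsum_eq_single 0 fun m hm => by simp [coeff_one, hm]]
  simp

theorem pairing_const_mul (a : ℝ≥0∞) (T : ℕ → ℝ≥0∞) (f : ℝ⟦X⟧) :
    pairing (fun m => a * T m) f = a * pairing T f := by
  simp only [pairing, ← ENNReal.tsum_mul_left, mul_left_comm]

theorem pairing_add (T : ℕ → ℝ≥0∞) (hf : CoeffNonneg f) (hg : CoeffNonneg g) :
    pairing T (f + g) = pairing T f + pairing T g := by
  simp only [pairing, map_add, ENNReal.ofReal_add (hf _) (hg _), add_mul, ENNReal.tsum_add]

theorem pairing_one_mul (hf : CoeffNonneg f) (hg : CoeffNonneg g) :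
    pairing 1 (f * g) = pairing 1 f * pairing 1 g := by
  simp only [pairing, Pi.one_apply, mul_one, tsum_mul_tsum_eq_tsum_sum_antidiagonal, coeff_mul]
  refine tsum_congr fun n => ?_
  rw [ENNReal.ofReal_sum_of_nonneg fun p _ => mul_nonneg (hf _) (hg _)]
  exact sum_congr rfl fun p _ => ENNReal.ofReal_mul (hf _)

theorem pairing_eulerResolvent (T : ℕ → ℝ≥0∞) (c : ℝ) (hf : CoeffNonneg f) :
    pairing T (eulerResolvent c f) = pairing (invSub c * T) f := by
  simp only [pairing, coeff_eulerResolvent, div_eq_mul_one_div (coeff _ f),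
    ENNReal.ofReal_mul (hf _), invSub, Pi.mul_apply, mul_assoc]

theorem pairing_strictSum (T : ℕ → ℝ≥0∞) (c : ℝ) (hf : CoeffNonneg f) :
    pairing T (strictSum c f) = pairing (tailSum (invSub c * T)) f := by
  have coefficient (q : ℕ) : ENNReal.ofReal (coeff q (strictSum c f)) * T q =
      ∑ m ∈ range q, ENNReal.ofReal (coeff m f) * (invSub c * T) q := by
    rw [coeff_strictSum, div_eq_mul_one_div, ENNReal.ofReal_mul (sum_nonneg fun m _ => hf m),
      ENNReal.ofReal_sum_of_nonneg fun m _ => hf m, ← sum_mul, mul_assoc]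
    rfl
  simp only [pairing, coefficient, ← tailSum_const_mul]
  exact tsum_sum_range_eq_tsum_tailSum fun m q => ENNReal.ofReal (coeff m f) * (invSub c * T) q

theorem hasSum_coeff_toReal_pairing (hf : CoeffNonneg f) (hfin : pairing 1 f ≠ ∞) :
    HasSum (fun n => coeff n f) (pairing 1 f).toReal := by
  simp only [pairing, Pi.one_apply, mul_one] at hfin ⊢
  rw [ENNReal.tsum_toReal_eq fun _ => ENNReal.ofReal_ne_top]
  simpa only [ENNReal.toReal_ofReal (hf _)] using ENNReal.hasSum_toReal hfin

end Pairing

section Connector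

variable {x : ℝ}

/-- The connector `(1 - x)ₙ (1 - x)ₘ / (1 - x)ₙ₊ₘ` of rising factorials. -/
noncomputable def connector (x : ℝ) (n m : ℕ) : ℝ :=
  (ascPochhammer ℝ n).eval (1 - x) * (ascPochhammer ℝ m).eval (1 - x) /
    (ascPochhammer ℝ (n + m)).eval (1 - x)

theorem connector_comm (x : ℝ) (n m : ℕ) : connector x n m = connector x m n := by
  rw [connector, connector, add_comm, mul_comm (Polynomial.eval _ _)]

theorem connector_nonneg (hx : x < 1) (n m : ℕ) : 0 ≤ connector x n m := by
  have pos (n : ℕ) := ascPochhammer_pos n (1 - x) (sub_pos.2 hx)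
  exact div_nonneg (mul_pos (pos n) (pos m)).le (pos _).le

theorem connector_zero_left (hx : x < 1) (m : ℕ) : connector x 0 m = 1 := by
  simp [connector, (ascPochhammer_pos m (1 - x) (sub_pos.2 hx)).ne']

theorem connector_succ_left (hx : x < 1) (n m : ℕ) :
    connector x (n + 1) m = connector x n m * ((n + 1 - x) / (n + m + 1 - x)) := by
  have pos := ascPochhammer_pos (n + m) (1 - x) (sub_pos.2 hx)
  have : (1 - x + (n + m) : ℝ) ≠ 0 := by linarith [n.cast_nonneg (α := ℝ), m.cast_nonneg (α := ℝ)]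
  have numerator : (n + 1 - x : ℝ) = 1 - x + n := by ring
  have denominator : (n + m + 1 - x : ℝ) = 1 - x + (n + m) := by ring
  simp only [connector, add_right_comm n 1 m, ascPochhammer_succ_eval, numerator, denominator]
  push_cast
  field_simp

theorem connector_le_one (hx : x < 1) (n m : ℕ) : connector x n m ≤ 1 := by
  induction n with
  | zero => rw [connector_zero_left hx]
  | succ n ih =>
    have := n.cast_nonneg (α := ℝ)
    have := m.cast_nonneg (α := ℝ)
    rw [connector_succ_left hx]
    exact mul_le_one₀ ih (div_nonneg (by linarith) (by linarith))
      (div_le_one_of_le₀ (by linarith) (by linarith))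

theorem tendsto_connector_atTop (hx : x < 1) {n : ℕ} (hn : 0 < n) :
    Filter.Tendsto (connector x n) Filter.atTop (nhds 0) := by
  obtain ⟨n, rfl⟩ := Nat.exists_eq_add_of_lt hn
  have bound : Filter.Tendsto (fun m : ℕ => (n + 1 - x) / (m + (n + 1 - x))) Filter.atTop
      (nhds 0) :=
    (Filter.tendsto_atTop_add_const_right _ _ tendsto_natCast_atTop_atTop).const_div_atTop _
  refine squeeze_zero (fun m => connector_nonneg hx _ m) (fun m => ?_) bound
  have := n.cast_nonneg (α := ℝ)
  have := m.cast_nonneg (α := ℝ)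
  rw [zero_add, connector_succ_left hx, ← add_sub_assoc, ← add_assoc, add_comm (m : ℝ)]
  exact mul_le_of_le_one_left (div_nonneg (by linarith) (by linarith)) (connector_le_one hx _ _)

theorem connector_sub_connector_succ (hx : x < 1) {n : ℕ} (hn : 0 < n) (m : ℕ) :
    1 / ((m + 1 : ℕ) - x) * connector x n (m + 1) =
      1 / n * connector x n m - 1 / n * connector x n (m + 1) := by
  have := m.cast_nonneg (α := ℝ)
  have : (0 : ℝ) < n := Nat.cast_pos.2 hn
  have : (m + 1 - x : ℝ) ≠ 0 := by linarith
  have : (m + n + 1 - x : ℝ) ≠ 0 := by linarith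
  rw [connector_comm x n (m + 1), connector_succ_left hx, connector_comm x m n]
  push_cast
  field_simp
  ring

theorem hasSum_invSub_mul_connector (hx : x < 1) {n : ℕ} (hn : 0 < n) (m : ℕ) :
    HasSum (fun j : ℕ => 1 / ((m + 1 + j : ℕ) - x) * connector x n (m + 1 + j))
      (1 / n * connector x n m) := by
  have := m.cast_nonneg (α := ℝ)
  rw [hasSum_iff_tendsto_nat_of_nonneg fun j => mul_nonneg (one_div_nonneg.2 (by
    push_cast; linarith [j.cast_nonneg (α := ℝ)])) (connector_nonneg hx _ _)]
  simp only [add_right_comm m 1, connector_sub_connector_succ hx hn]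
  simp only [add_assoc m _ 1, sum_range_sub' fun j => 1 / (n : ℝ) * connector x n (m + j)]
  simpa [add_comm] using ((Filter.tendsto_add_atTop_iff_nat m).2
    ((tendsto_connector_atTop hx hn).const_mul (1 / (n : ℝ)))).const_sub (1 / n * connector x n m)

end Connector

section ConnectedSums

open PowerSeries
open scoped ENNReal

variable {x : ℝ} {f : ℝ⟦X⟧}

/-- The connected sum `∑ m, connector x n m * fₘ`. -/
noncomputable def connectedSum (x : ℝ) (f : ℝ⟦X⟧) (n : ℕ) : ℝ≥0∞ :=
  pairing (fun m => ENNReal.ofReal (connector x n m)) f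

theorem natCast_ne_of_pos_of_lt_one (hx0 : 0 < x) (hx : x < 1) (n : ℕ) : (n : ℝ) ≠ x := by
  rcases n.eq_zero_or_pos with rfl | hn
  · simpa using hx0.ne
  · exact (hx.trans_le (Nat.one_le_cast.2 hn)).ne'

theorem tailSum_invSub_mul_connector (hx : x < 1) {n : ℕ} (hn : 0 < n) (m : ℕ) :
    tailSum (fun q => invSub x q * ENNReal.ofReal (connector x n q)) m =
      invSub 0 n * ENNReal.ofReal (connector x n m) := by
  have nonneg (j : ℕ) : (0 : ℝ) ≤ 1 / ((m + 1 + j : ℕ) - x) := one_div_nonneg.2 (by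
    push_cast; linarith [m.cast_nonneg (α := ℝ), j.cast_nonneg (α := ℝ)])
  have total := hasSum_invSub_mul_connector hx hn m
  simp only [tailSum, invSub, sub_zero]
  rw [← ENNReal.ofReal_mul (by positivity), ← total.tsum_eq, ENNReal.ofReal_tsum_of_nonneg
    (fun j => mul_nonneg (nonneg j) (connector_nonneg hx _ _)) total.summable]
  exact tsum_congr fun j => (ENNReal.ofReal_mul (nonneg j)).symm

theorem connectedSum_zero_right (hx : x < 1) (f : ℝ⟦X⟧) : connectedSum x f 0 = pairing 1 f := by
  simp [connectedSum, pairing, connector_zero_left hx]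

theorem connectedSum_one (hx : x < 1) (n : ℕ) : connectedSum x 1 n = 1 := by
  rw [connectedSum, pairing_one_right, connector_comm, connector_zero_left hx, ENNReal.ofReal_one]

theorem connectedSum_strictSum_pow (hx : x < 1) (hf : CoeffNonneg f) {n : ℕ} (hn : 0 < n) (b : ℕ) :
    connectedSum x ((strictSum x ^ b) f) n = invSub 0 n ^ b * connectedSum x f n := by
  induction b with
  | zero => simp
  | succ b ih =>
    rw [pow_succ' (invSub 0 n), mul_assoc, ← ih, pow_succ', Module.End.mul_apply, connectedSum,
      pairing_strictSum _ _ (hf.strictSum_pow hx b), connectedSum, ← pairing_const_mul]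
    congr 1
    exact funext fun m => tailSum_invSub_mul_connector hx hn m

theorem connectedSum_eulerResolvent_zero (hx : x < 1) (hf : CoeffNonneg f) (h0 : coeff 0 f = 0)
    (n : ℕ) :
    connectedSum x (eulerResolvent 0 f) n = tailSum (invSub x * connectedSum x f) n := by
  have transport (m : ℕ) : ENNReal.ofReal (coeff m f) *
      (invSub 0 m * ENNReal.ofReal (connector x n m)) =
      tailSum (fun q => invSub x q *
        (ENNReal.ofReal (coeff m f) * ENNReal.ofReal (connector x q m))) n := by
    rcases m.eq_zero_or_pos with rfl | hm
    · simp [h0, tailSum]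
    · simp only [mul_left_comm (invSub x _), tailSum_const_mul, connector_comm x _ m,
        tailSum_invSub_mul_connector hx hm]
  rw [connectedSum, pairing_eulerResolvent _ _ hf]
  simp only [pairing, Pi.mul_apply, transport, ← tailSum_tsum, ENNReal.tsum_mul_left]
  rfl

theorem connectedSum_closedChain (hx : x < 1) (a n : ℕ) :
    connectedSum x (closedChain x (a + 1)) n = tailSum (invSub x * invSub 0 ^ (a + 1)) n := by
  rw [closedChain, connectedSum_eulerResolvent_zero hx (.chain hx _)
    (by rw [chain_succ, coeff_zero_strictSum])]
  refine tailSum_congr fun q hq => ?_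
  rw [Pi.mul_apply, chain, connectedSum_strictSum_pow hx .one (by omega), connectedSum_one hx,
    mul_one]
  rfl

theorem pairing_one_closedChain (hx : x < 1) (a : ℕ) :
    pairing 1 (closedChain x (a + 1)) = tailSum (invSub x * invSub 0 ^ (a + 1)) 0 := by
  rw [← connectedSum_zero_right hx, connectedSum_closedChain hx]

theorem pairing_one_strictSum_pow_closedChain (hx : x < 1) (a b : ℕ) :
    pairing 1 (eulerResolvent 0 ((strictSum x ^ b) (closedChain x (a + 1)))) =
      tailSum (invSub x * invSub 0 ^ b * tailSum (invSub x * invSub 0 ^ (a + 1))) 0 := by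
  rw [← connectedSum_zero_right hx, connectedSum_eulerResolvent_zero hx
    ((CoeffNonneg.closedChain hx _).strictSum_pow hx b)
    (coeff_zero_strictSum_pow (coeff_zero_closedChain x _) b)]
  refine tailSum_congr fun q hq => ?_
  rw [Pi.mul_apply, connectedSum_strictSum_pow hx (.closedChain hx _) hq,
    connectedSum_closedChain hx, ← mul_assoc]
  rfl

theorem tailSum_invSub_mul_invSub_pow_ne_top (hx0 : 0 ≤ x) (hx : x < 1) (a : ℕ) :
    tailSum (invSub x * invSub 0 ^ (a + 1)) 0 ≠ ∞ := by
  have summable : Summable fun q : ℕ => 1 / (1 - x) * (1 / ((q + 1 : ℕ) : ℝ) ^ 2) :=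
    ((summable_nat_add_iff 1).2 (Real.summable_one_div_nat_pow.2 one_lt_two)).mul_left _
  refine ne_top_of_le_ne_top summable.tsum_ofReal_ne_top ?_
  rw [tailSum_zero]
  refine ENNReal.tsum_le_tsum fun q => ?_
  simp only [Pi.mul_apply, Pi.pow_apply, invSub, sub_zero]
  have hq : (1 : ℝ) ≤ (q + 1 : ℕ) := Nat.one_le_cast.2 (by omega)
  generalize ((q + 1 : ℕ) : ℝ) = y at hq ⊢
  have pos : 0 < (1 - x) * y := by nlinarith
  have inv_le : 1 / (y - x) ≤ 1 / ((1 - x) * y) := one_div_le_one_div_of_le pos (by nlinarith)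
  have pow_le : (1 / y) ^ (a + 1) ≤ 1 / y :=
    pow_le_of_le_one (by positivity) (div_le_one_of_le₀ hq (by linarith)) a.succ_ne_zero
  rw [← ENNReal.ofReal_pow (by positivity), ← ENNReal.ofReal_mul (one_div_nonneg.2 (by linarith))]
  refine ENNReal.ofReal_le_ofReal ?_
  calc
    1 / (y - x) * (1 / y) ^ (a + 1) ≤ 1 / ((1 - x) * y) * (1 / y) := by gcongr
    _ = 1 / (1 - x) * (1 / y ^ 2) := by field_simp

/-- The sum of `1 / ((q - x) ^ 2 * q ^ (k + 2))` over `q > 0`. -/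
noncomputable def doublePoleSum (x : ℝ) (k : ℕ) : ℝ≥0∞ :=
  tailSum (invSub x ^ 2 * invSub 0 ^ (k + 2)) 0

theorem pairing_one_shuffleRemainder_add (hx0 : 0 < x) (hx : x < 1) (a b : ℕ) :
    pairing 1 (eulerResolvent 0 (shuffleRemainder x (chain x (a + 1)) (b + 1) +
      shuffleRemainder x (chain x (b + 1)) (a + 1))) = doublePoleSum x (a + b) := by
  have nonneg_depth_two (a b : ℕ) : CoeffNonneg
      (eulerResolvent 0 ((strictSum x ^ (b + 1)) (closedChain x (a + 1)))) :=
    ((CoeffNonneg.closedChain hx _).strictSum_pow hx _).eulerResolvent_zero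
  have nonneg_remainder (a b : ℕ) : CoeffNonneg (shuffleRemainder x (chain x (a + 1)) (b + 1)) :=
    (CoeffNonneg.chain hx _).shuffleRemainder hx _
  have shuffle := pairing_one_mul (CoeffNonneg.closedChain hx (a + 1)) (.closedChain hx (b + 1))
  rw [closedChain_succ_mul_closedChain_succ (natCast_ne_of_pos_of_lt_one hx0 hx),
    pairing_add 1 ((nonneg_depth_two a b).add (nonneg_depth_two b a))
      ((nonneg_remainder a b).add (nonneg_remainder b a)).eulerResolvent_zero,
    pairing_add 1 (nonneg_depth_two a b) (nonneg_depth_two b a),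
    pairing_one_strictSum_pow_closedChain hx, pairing_one_strictSum_pow_closedChain hx,
    pairing_one_closedChain hx, pairing_one_closedChain hx] at shuffle
  have stuffle := tailSum_mul_tailSum (invSub x * invSub 0 ^ (a + 1))
    (invSub x * invSub 0 ^ (b + 1)) 0
  have finite := ENNReal.mul_ne_top (tailSum_invSub_mul_invSub_pow_ne_top hx0.le hx a)
    (tailSum_invSub_mul_invSub_pow_ne_top hx0.le hx b)
  rw [stuffle] at shuffle finite
  rw [add_comm (tailSum _ 0)] at shuffle
  rw [(ENNReal.add_right_inj (ne_top_of_le_ne_top finite le_self_add)).1 shuffle, doublePoleSum]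
  congr 1
  ring

theorem doublePoleSum_ne_top (hx0 : 0 ≤ x) (hx : x < 1) (k : ℕ) : doublePoleSum x k ≠ ∞ := by
  have product : doublePoleSum x k =
      tailSum ((invSub x * invSub 0 ^ (k + 1)) * (invSub x * invSub 0 ^ (0 + 1))) 0 := by
    rw [doublePoleSum]; congr 1; ring
  refine ne_top_of_le_ne_top (ENNReal.mul_ne_top (tailSum_invSub_mul_invSub_pow_ne_top hx0 hx k)
    (tailSum_invSub_mul_invSub_pow_ne_top hx0 hx 0)) ?_
  rw [product, tailSum_mul_tailSum]
  exact le_add_self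

theorem hasSum_coeff_blockChain (hx0 : 0 < x) (hx : 2 * x < 1) (s t : ℝ) (k : ℕ) :
    HasSum (fun n => ∑ a ∈ antidiagonal k, ∑ b ∈ antidiagonal a.2,
        ((s ^ a.1 + t ^ a.1) * (s + t) ^ b.1 * (s ^ b.2 + t ^ b.2)) *
          coeff n (eulerResolvent 0 (blockChain x a.1 b.1 b.2)))
      ((doublePoleSum x k).toReal * ∑ a ∈ antidiagonal k, s ^ a.1 * t ^ a.2) := by
  have hx1 : x < 1 := by linarith
  have remainder {a : ℕ × ℕ} (ha : a ∈ antidiagonal k) :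
      HasSum (fun n => coeff n (eulerResolvent 0 (shuffleRemainder x (chain x (a.1 + 1)) (a.2 + 1) +
        shuffleRemainder x (chain x (a.2 + 1)) (a.1 + 1)))) (doublePoleSum x k).toReal := by
    have value := pairing_one_shuffleRemainder_add hx0 hx1 a.1 a.2
    rw [mem_antidiagonal.1 ha] at value
    rw [← value]
    refine hasSum_coeff_toReal_pairing (CoeffNonneg.eulerResolvent_zero (.add ?_ ?_))
      (value ▸ doublePoleSum_ne_top hx0.le hx1 k) <;>
    exact (CoeffNonneg.chain hx1 _).shuffleRemainder hx1 _
  have total := hasSum_sum fun a ha => (remainder ha).mul_left (s ^ a.1 * t ^ a.2)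
  rw [← sum_mul, mul_comm] at total
  refine total.congr_fun fun n => ?_
  have identity := congrArg (fun f => coeff n (eulerResolvent 0 f))
    (homogSum_shuffleRemainder_add_swap (natCast_ne_of_pos_of_lt_one hx0 hx1)
      (natCast_ne_of_pos_of_lt_one (by linarith) hx) s t k)
  simpa only [homogSum, map_sum, map_smul, smul_eq_mul] using identity.symm

theorem pairing_one_blockChain_ne_top (hx0 : 0 < x) (hx : 2 * x < 1) (a₁ a₂ a₃ : ℕ) :
    pairing 1 (eulerResolvent 0 (blockChain x a₁ a₂ a₃)) ≠ ∞ := by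
  have nonneg (a₁ a₂ a₃ n : ℕ) : 0 ≤ coeff n (eulerResolvent 0 (blockChain x a₁ a₂ a₃)) :=
    (CoeffNonneg.blockChain (by linarith) hx _ _ _).eulerResolvent_zero n
  have summable := (hasSum_coeff_blockChain hx0 hx 1 1 (a₁ + (a₂ + a₃))).summable
  refine ne_top_of_le_ne_top summable.tsum_ofReal_ne_top (ENNReal.tsum_le_tsum fun n => ?_)
  let F (a b : ℕ × ℕ) : ℝ := ((1 ^ a.1 + 1 ^ a.1) * (1 + 1) ^ b.1 * (1 ^ b.2 + 1 ^ b.2)) *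
    coeff n (eulerResolvent 0 (blockChain x a.1 b.1 b.2))
  have F_nonneg (a b : ℕ × ℕ) : 0 ≤ F a b := mul_nonneg (by positivity) (nonneg _ _ _ n)
  have one_le : (1 : ℝ) ≤ (1 ^ a₁ + 1 ^ a₁) * (1 + 1) ^ a₂ * (1 ^ a₃ + 1 ^ a₃) := by
    norm_num
    linarith [one_le_pow₀ (one_le_two (α := ℝ)) (n := a₂)]
  rw [Pi.one_apply, mul_one]
  refine ENNReal.ofReal_le_ofReal ?_
  calc
    coeff n (eulerResolvent 0 (blockChain x a₁ a₂ a₃)) ≤ F (a₁, a₂ + a₃) (a₂, a₃) :=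
      le_mul_of_one_le_left (nonneg a₁ a₂ a₃ n) one_le
    _ ≤ ∑ b ∈ antidiagonal (a₂ + a₃), F (a₁, a₂ + a₃) b :=
      single_le_sum (fun b _ => F_nonneg _ b) (mem_antidiagonal.2 rfl)
    _ ≤ ∑ a ∈ antidiagonal (a₁ + (a₂ + a₃)), ∑ b ∈ antidiagonal a.2, F a b :=
      single_le_sum (f := fun a => ∑ b ∈ antidiagonal a.2, F a b)
        (fun a _ => sum_nonneg fun b _ => F_nonneg a b) (mem_antidiagonal.2 rfl)

theorem sum_toReal_pairing_one_blockChain (hx0 : 0 < x) (hx : 2 * x < 1) (s t : ℝ) (k : ℕ) :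
    ∑ a ∈ antidiagonal k, ∑ b ∈ antidiagonal a.2,
        ((s ^ a.1 + t ^ a.1) * (s + t) ^ b.1 * (s ^ b.2 + t ^ b.2)) *
          (pairing 1 (eulerResolvent 0 (blockChain x a.1 b.1 b.2))).toReal =
      (doublePoleSum x k).toReal * ∑ a ∈ antidiagonal k, s ^ a.1 * t ^ a.2 := by
  refine (hasSum_sum fun a _ => hasSum_sum fun b _ => .mul_left _ ?_).unique
    (hasSum_coeff_blockChain hx0 hx s t k)
  exact hasSum_coeff_toReal_pairing
    (CoeffNonneg.blockChain (by linarith) hx _ _ _).eulerResolvent_zero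
    (pairing_one_blockChain_ne_top hx0 hx _ _ _)

end ConnectedSums

section PowerSeriesUniqueness

open FormalMultilinearSeries in
theorem eq_of_hasSum_mul_pow {c d : ℕ → ℝ} {r : ℝ} (hr : 0 < r)
    (h : ∀ x, 0 < x → x < r → ∃ v, HasSum (fun m => c m * x ^ m) v ∧
      HasSum (fun m => d m * x ^ m) v) : c = d := by
  have vanishing {x : ℝ} (hx0 : 0 < x) (hx : x < r) : HasSum (fun m => (c - d) m * x ^ m) 0 := by
    obtain ⟨v, hc, hd⟩ := h x hx0 hx
    simpa [sub_mul] using hc.sub hd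
  set p := ofScalars ℝ (c - d)
  have radius_pos : 0 < p.radius := by
    have summable := (vanishing (half_pos hr) (half_lt_self hr)).summable.norm
    refine (ENNReal.ofReal_pos.2 (half_pos hr)).trans_le (p.le_radius_of_summable ?_)
    simpa [p, ofScalars_norm, Real.coe_toNNReal _ (half_pos hr).le, abs_of_pos hr] using summable
  have series := p.hasFPowerSeriesOnBall radius_pos
  have sum_eq_zero {x : ℝ} (hx : x ∈ Set.Ioo 0 r) : p.sum x = 0 := by
    rw [show p.sum = ofScalarsSum (c - d) from rfl, ofScalarsSum_eq_tsum]
    simpa using (vanishing hx.1 hx.2).tsum_eq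
  have frequently : ∃ᶠ x in nhdsWithin 0 {0}ᶜ, p.sum x = 0 :=
    (Filter.eventually_of_mem (Ioo_mem_nhdsGT hr) fun x => sum_eq_zero).frequently.filter_mono
      (nhdsWithin_mono _ fun x hx => ne_of_gt hx)
  have eventually := series.analyticAt.frequently_zero_iff_eventually_zero.1 frequently
  exact sub_eq_zero.1 ((ofScalars_series_eq_zero ℝ).1
    (series.hasFPowerSeriesAt.eq_zero_of_eventually eventually))

end PowerSeriesUniqueness

section GeneratingFunction

open scoped ENNReal

variable {x : ℝ}

theorem hasSum_toReal_mul_pow (hx : 0 ≤ x) {C : ℕ → ℝ≥0∞} {v : ℝ≥0∞}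
    (hC : ∑' m, ENNReal.ofReal x ^ m * C m = v) (hv : v ≠ ∞) :
    HasSum (fun m => (C m).toReal * x ^ m) v.toReal := by
  subst hC
  rw [ENNReal.tsum_toReal_eq (ENNReal.ne_top_of_tsum_ne_top hv)]
  simpa [ENNReal.toReal_mul, hx, mul_comm] using ENNReal.hasSum_toReal hv

/-- The multiple zeta value as an extended nonnegative real, infinite when the series diverges. -/
noncomputable def emzv {n : ℕ} (α : Fin n → ℕ) : ℝ≥0∞ :=
  ∑' v : {v : Fin n → ℕ // StrictMono v ∧ ∀ i, 0 < v i}, ∏ i, invSub 0 (v.1 i) ^ α i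

theorem toReal_emzv {n : ℕ} (α : Fin n → ℕ) : (emzv α).toReal = mzv α := by
  have ne_top (c : ℝ) (n : ℕ) : invSub c n ≠ ∞ := ENNReal.ofReal_ne_top
  rw [emzv, ENNReal.tsum_toReal_eq fun v =>
    ENNReal.prod_ne_top fun i _ => ENNReal.pow_ne_top (ne_top _ _)]
  simp [mzv, invSub, ENNReal.toReal_prod]

theorem emzv_singleton (s : ℕ) : emzv ![s] = tailSum (invSub 0 ^ s) 0 := by
  have depth_one := nestedSum_succ_zero 1 (fun _ => invSub 0 ^ s) 0
  simp only [nestedSum, mul_one, Pi.one_apply, Pi.pow_apply] at depth_one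
  rw [depth_one, emzv]
  simp

theorem prod_invSub_pow_incLast {n : ℕ} (α v : Fin (n + 1) → ℕ) :
    ∏ i, invSub 0 (v i) ^ incLast α i =
      (∏ i, invSub 0 (v i) ^ α i) * invSub 0 (v (Fin.last n)) := by
  simp [incLast, Fin.prod_univ_castSucc, pow_succ, mul_assoc, Fin.is_lt, Nat.ne_of_lt]

theorem tsum_add_one_eq_tsum_comp (n : ℕ) (F : (Fin n → ℕ) → ℝ≥0∞) :
    ∑' s : Fin n → ℕ, F (fun i => s i + 1) = ∑' m, ∑' α : Comp n (n + m), F α.1 := by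
  have sum_add_one (s : Fin n → ℕ) : ∑ i, (s i + 1) = n + ∑ i, s i := by
    simp [sum_add_distrib, add_comm]
  let addOne (s : Fin n → ℕ) : Σ m, Comp n (n + m) :=
    ⟨∑ i, s i, fun i => s i + 1, fun i => (s i).succ_pos, sum_add_one s⟩
  have bijective : Function.Bijective addOne := by
    constructor
    · intro s s' h
      exact funext fun i => Nat.succ_injective (congrFun (congrArg (fun p => p.2.1) h) i)
    · rintro ⟨m, α, positive, total⟩
      obtain ⟨s, rfl⟩ : ∃ s : Fin n → ℕ, α = fun i => s i + 1 :=
        ⟨fun i => α i - 1, funext fun i => (Nat.sub_add_cancel (positive i)).symm⟩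
      obtain rfl : m = ∑ i, s i := Nat.add_left_cancel (total.symm.trans (sum_add_one s))
      exact ⟨s, rfl⟩
  rw [← ENNReal.tsum_sigma (f := fun m (α : Comp n (n + m)) => F α.1),
    ← (Equiv.ofBijective addOne bijective).tsum_eq]
  rfl

theorem nestedSum_eq_tsum_comp {n : ℕ} {y : ℝ≥0∞} {c w : ℕ → ℕ → ℝ≥0∞}
    (hw : ∀ r q, 0 < q → w r q = ∑' s, c r (s + 1) * y ^ s * invSub 0 q ^ (s + 1)) :
    nestedSum (invSub 0) w (n + 1) 0 = ∑' m, y ^ m * ∑' α : Comp (n + 1) (n + 1 + m),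
      (∏ i : Fin (n + 1), c i (α.1 i)) * emzv (incLast α.1) := by
  let F (α : Fin (n + 1) → ℕ) : ℝ≥0∞ :=
    y ^ (∑ i, α i - (n + 1)) * ((∏ i : Fin (n + 1), c i (α i)) * emzv (incLast α))
  have summand (s : Fin (n + 1) → ℕ) : F (fun i => s i + 1) =
      ∑' v : {v : Fin (n + 1) → ℕ // StrictMono v ∧ ∀ i, 0 < v i},
        (∏ i : Fin (n + 1), c i (s i + 1) * y ^ s i * invSub 0 (v.1 i) ^ (s i + 1)) *
          invSub 0 (v.1 (Fin.last n)) := by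
    have degree : ∑ i, (s i + 1) - (n + 1) = ∑ i, s i := by simp [sum_add_distrib]
    simp only [F, degree, emzv, prod_invSub_pow_incLast, prod_mul_distrib, prod_pow_eq_pow_sum,
      mul_assoc, ENNReal.tsum_mul_left]
    ring
  calc
    nestedSum (invSub 0) w (n + 1) 0 = ∑' s : Fin (n + 1) → ℕ, F (fun i => s i + 1) := by
      simp only [nestedSum_succ_zero, summand]
      rw [ENNReal.tsum_comm]
      refine tsum_congr fun v => ?_
      rw [ENNReal.tsum_mul_right, tsum_prod_eq_prod_tsum fun (i : Fin (n + 1)) s =>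
        c i (s + 1) * y ^ s * invSub 0 (v.1 i) ^ (s + 1)]
      simp only [hw _ _ (v.2.2 _)]
    _ = ∑' m, ∑' α : Comp (n + 1) (n + 1 + m), F α.1 := tsum_add_one_eq_tsum_comp _ F
    _ = _ := by
      refine tsum_congr fun m => ?_
      rw [← ENNReal.tsum_mul_left]
      refine tsum_congr fun α => ?_
      simp only [F, α.2.2, Nat.add_sub_cancel_left]

theorem tsum_ofReal_mul_pow_mul_invSub_pow (hx : 0 ≤ x) {F : ℕ → ℝ} (hF : ∀ s, 0 ≤ F s) {q : ℕ}
    {v : ℝ} (hv : HasSum (fun s => F s * (x ^ s * (1 / (q : ℝ)) ^ (s + 1))) v) :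
    ∑' s, ENNReal.ofReal (F s) * ENNReal.ofReal x ^ s * invSub 0 q ^ (s + 1) =
      ENNReal.ofReal v := by
  rw [← hv.tsum_eq, ENNReal.ofReal_tsum_of_nonneg
    (fun s => mul_nonneg (hF s) (by positivity)) hv.summable]
  refine tsum_congr fun s => ?_
  rw [invSub, sub_zero, ← ENNReal.ofReal_pow hx, ← ENNReal.ofReal_pow (by positivity),
    ← ENNReal.ofReal_mul (hF s), ← ENNReal.ofReal_mul (mul_nonneg (hF s) (by positivity)),
    mul_assoc]

theorem tsum_pow_mul_natCast_mul_emzv (hx0 : 0 ≤ x) (hx : x < 1) (k : ℕ) :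
    ∑' m : ℕ, ENNReal.ofReal x ^ m * (m * emzv ![k + m + 3]) =
      ENNReal.ofReal x * doublePoleSum x k := by
  have double_pole {q : ℕ} (hq : 0 < q) :
      ∑' m : ℕ, ENNReal.ofReal m * ENNReal.ofReal x ^ m * invSub 0 q ^ (m + 1) =
        ENNReal.ofReal x * invSub x q ^ 2 := by
    have hxq : x < q := hx.trans_le (Nat.one_le_cast.2 hq)
    have pos : (0 : ℝ) < q := hx0.trans_lt hxq
    have value : x / q / (1 - x / q) ^ 2 * (1 / q) = x * (1 / (q - x)) ^ 2 := by
      rw [one_sub_div pos.ne']; field_simp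
    have norm_lt_one : ‖x / q‖ < 1 := by
      rw [Real.norm_of_nonneg (by positivity)]; exact (div_lt_one pos).2 hxq
    have series := (hasSum_coe_mul_geometric_of_norm_lt_one norm_lt_one).mul_right (1 / (q : ℝ))
    rw [invSub.eq_def x, ← ENNReal.ofReal_pow (one_div_nonneg.2 (sub_pos.2 hxq).le),
      ← ENNReal.ofReal_mul hx0]
    refine tsum_ofReal_mul_pow_mul_invSub_pow hx0 (fun m => m.cast_nonneg) ?_
    rw [← value]
    exact series.congr_fun fun m => by rw [div_pow]; ring
  simp only [emzv_singleton, doublePoleSum, ← tailSum_const_mul, ← tailSum_tsum]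
  refine tailSum_congr fun q hq => ?_
  rw [Pi.mul_apply, ← mul_assoc, Pi.pow_apply, ← double_pole hq, ← ENNReal.tsum_mul_right]
  refine tsum_congr fun m => ?_
  rw [ENNReal.ofReal_natCast, Pi.pow_apply, Pi.pow_apply, show k + m + 3 = m + 1 + (k + 2) by ring,
    pow_add]
  ring

theorem pairing_nestedSum_block {c : ℝ} (hc : c < 1) {f : PowerSeries ℝ} (hf : CoeffNonneg f)
    (g : ℕ → ℝ≥0∞) {w : ℕ → ℕ → ℝ≥0∞} {b : ℕ} (hw : ∀ i < b, w i = invSub c) (n : ℕ) :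
    pairing (nestedSum g w (b + n)) f =
      pairing (nestedSum g (fun r => w (b + r)) n) ((strictSum c ^ b) f) := by
  induction b generalizing w f with
  | zero => simp
  | succ b ih =>
    rw [add_right_comm, nestedSum, hw 0 b.succ_pos, ← pairing_strictSum _ _ hf,
      ih (hf.strictSum hc) fun i hi => hw _ (by omega), pow_succ, Module.End.mul_apply]
    simp only [add_right_comm b 1]

/-- The coefficient that the entry `t` in position `r` contributes to the weight `compWeight`. -/
noncomputable def slotCoeff (a₁ a₂ r t : ℕ) : ℝ :=
  (if r ∈ Icc (a₁ + 1) (a₁ + a₂ + 1) then 2 ^ (t - 1) else 1) *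
    (if r = a₁ + a₂ + 1 then 1 - 2 ^ ((1 : ℤ) - t) else 1)

/-- The sum of `slotCoeff a₁ a₂ r (s + 1) * x ^ s / q ^ (s + 1)` over `s`, in closed form. -/
noncomputable def slotWeight (x : ℝ) (a₁ a₂ r q : ℕ) : ℝ≥0∞ :=
  (if r ∈ Icc (a₁ + 1) (a₁ + a₂ + 1) then invSub (2 * x) q else invSub x q) *
    (if r = a₁ + a₂ + 1 then ENNReal.ofReal x * invSub x q else 1)

theorem one_sub_two_zpow_nonneg {t : ℕ} (ht : 0 < t) : (0 : ℝ) ≤ 1 - 2 ^ ((1 : ℤ) - t) :=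
  sub_nonneg.2 (zpow_le_one_of_nonpos₀ one_le_two (by omega))

theorem slotCoeff_nonneg (a₁ a₂ r : ℕ) {t : ℕ} (ht : 0 < t) : 0 ≤ slotCoeff a₁ a₂ r t := by
  have := one_sub_two_zpow_nonneg ht
  unfold slotCoeff
  positivity

theorem hasSum_pow_mul_one_div_pow {y q : ℝ} (hy : 0 ≤ y) (hyq : y < q) :
    HasSum (fun s : ℕ => y ^ s * (1 / q) ^ (s + 1)) (1 / (q - y)) := by
  have pos : 0 < q := hy.trans_lt hyq
  have value : (1 - y / q)⁻¹ * (1 / q) = 1 / (q - y) := by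
    rw [one_sub_div pos.ne']; field_simp
  rw [← value]
  refine ((hasSum_geometric_of_lt_one (div_nonneg hy pos.le) ((div_lt_one pos).2 hyq)).mul_right
    (1 / q)).congr_fun fun s => ?_
  rw [div_pow]
  ring

theorem slotCoeff_special (a₁ a₂ s : ℕ) : slotCoeff a₁ a₂ (a₁ + a₂ + 1) (s + 1) = 2 ^ s - 1 := by
  simp [slotCoeff, mul_sub]

theorem slotWeight_of_notMem (x : ℝ) {a₁ a₂ r : ℕ} (hr : r ∉ Icc (a₁ + 1) (a₁ + a₂ + 1)) :
    slotWeight x a₁ a₂ r = invSub x := by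
  have special : r ≠ a₁ + a₂ + 1 := by rintro rfl; simp at hr
  ext q; rw [slotWeight, if_neg hr, if_neg special, mul_one]

theorem slotWeight_of_mem (x : ℝ) {a₁ a₂ r : ℕ} (hr : r ∈ Icc (a₁ + 1) (a₁ + a₂ + 1))
    (special : r ≠ a₁ + a₂ + 1) : slotWeight x a₁ a₂ r = invSub (2 * x) := by
  ext q; rw [slotWeight, if_pos hr, if_neg special, mul_one]

theorem slotWeight_special (x : ℝ) (a₁ a₂ : ℕ) : slotWeight x a₁ a₂ (a₁ + a₂ + 1) =
    fun q => ENNReal.ofReal x * (invSub (2 * x) * invSub x) q := by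
  ext q; simp [slotWeight, mul_left_comm]

theorem tsum_slotCoeff (hx0 : 0 ≤ x) (hx : 2 * x < 1) (a₁ a₂ r : ℕ) {q : ℕ} (hq : 0 < q) :
    ∑' s, ENNReal.ofReal (slotCoeff a₁ a₂ r (s + 1)) * ENNReal.ofReal x ^ s *
      invSub 0 q ^ (s + 1) = slotWeight x a₁ a₂ r q := by
  have hq : (1 : ℝ) ≤ q := Nat.one_le_cast.2 hq
  have single := hasSum_pow_mul_one_div_pow hx0 (by linarith : x < q)
  have double := hasSum_pow_mul_one_div_pow (by linarith : 0 ≤ 2 * x) (by linarith : 2 * x < q)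
  simp only [mul_pow, mul_assoc] at double
  have expand {v : ℝ} := tsum_ofReal_mul_pow_mul_invSub_pow hx0 (q := q) (v := v)
    fun s => slotCoeff_nonneg a₁ a₂ r (Nat.add_one_pos s)
  by_cases hr : r ∈ Icc (a₁ + 1) (a₁ + a₂ + 1)
  · rcases eq_or_ne r (a₁ + a₂ + 1) with rfl | special
    · have partial_fractions :
          1 / (q - 2 * x) - 1 / (q - x) = x * (1 / (q - 2 * x) * (1 / (q - x))) := by
        have : q - x ≠ 0 := by linarith
        have : q - 2 * x ≠ 0 := by linarith
        field_simp
        ring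
      have difference := double.sub single
      rw [partial_fractions] at difference
      rw [expand (difference.congr_fun fun s => by rw [slotCoeff_special]; ring),
        slotWeight_special, ENNReal.ofReal_mul hx0,
        ENNReal.ofReal_mul (one_div_nonneg.2 (by linarith))]
      rfl
    · rw [expand (double.congr_fun fun s => by rw [slotCoeff, if_pos hr, if_neg special, mul_one,
        Nat.add_one_sub_one]), slotWeight_of_mem x hr special, invSub]
  · have special : r ≠ a₁ + a₂ + 1 := by rintro rfl; simp at hr
    rw [expand (single.congr_fun fun s => by rw [slotCoeff, if_neg hr, if_neg special, one_mul,
      one_mul]), slotWeight_of_notMem x hr, invSub]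

theorem nestedSum_slotWeight (hx : 2 * x < 1) (hx1 : x < 1) (a₁ a₂ a₃ : ℕ) :
    nestedSum (invSub 0) (slotWeight x a₁ a₂) (a₁ + a₂ + a₃ + 2) 0 =
      ENNReal.ofReal x * pairing 1 (eulerResolvent 0 (blockChain x a₁ a₂ a₃)) := by
  have first (r : ℕ) (hr : r < a₁ + 1) : slotWeight x a₁ a₂ r = invSub x :=
    slotWeight_of_notMem x (by rw [mem_Icc]; omega)
  have second (r : ℕ) (hr : r < a₂) : slotWeight x a₁ a₂ (a₁ + 1 + r) = invSub (2 * x) :=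
    slotWeight_of_mem x (by rw [mem_Icc]; omega) (by omega)
  have third (r : ℕ) (_ : r < a₃) : slotWeight x a₁ a₂ (a₁ + 1 + (a₂ + (r + 1))) = invSub x :=
    slotWeight_of_notMem x (by rw [mem_Icc]; omega)
  have factor (N : ℕ → ℝ≥0∞) :
      tailSum (slotWeight x a₁ a₂ (a₁ + 1 + (a₂ + 0)) * N) =
        fun m => ENNReal.ofReal x * tailSum (invSub (2 * x) * (invSub x * N)) m := by
    rw [add_zero, add_right_comm, slotWeight_special]
    ext m
    rw [← tailSum_const_mul, ← mul_assoc]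
    simp only [Pi.mul_def, mul_assoc]
  have nonneg_chain : CoeffNonneg (chain x (a₁ + 1)) := .chain hx1 _
  have nonneg (b : ℕ) := nonneg_chain.strictSum_pow hx b
  have last_block := pairing_nestedSum_block hx1 ((nonneg (a₂ + 1)).eulerResolvent_of_lt_one hx1
    (by rw [pow_succ', Module.End.mul_apply, coeff_zero_strictSum])) (invSub 0) third 0
  rw [add_zero, ← blockChain] at last_block
  rw [← pairing_one_right (nestedSum _ _ _),
    show a₁ + a₂ + a₃ + 2 = a₁ + 1 + (a₂ + (a₃ + 1)) by ring,
    pairing_nestedSum_block hx1 .one _ first, ← chain,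
    pairing_nestedSum_block hx nonneg_chain _ second, nestedSum, factor, pairing_const_mul,
    ← pairing_strictSum _ _ (nonneg a₂), ← Module.End.mul_apply, ← pow_succ',
    ← pairing_eulerResolvent _ _ (nonneg _), last_block,
    pairing_eulerResolvent _ _ (.blockChain hx1 hx _ _ _), mul_one, nestedSum]

/-- The factor of `mzv (incLast α)` in the identity, apart from the parameters `μ₁` and `μ₂`. -/
noncomputable def compWeight {n : ℕ} (a₁ a₂ : ℕ) (α : Fin n → ℕ) : ℝ :=
  2 ^ ((∑ r ∈ Icc (a₁ + 1) (a₁ + a₂ + 1), ext α r) - 1 - a₂) *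
    (1 - 2 ^ ((1 : ℤ) - (ext α (a₁ + a₂ + 1) : ℤ)))

theorem prod_slotCoeff {n a₁ a₂ : ℕ} (h : a₁ + a₂ + 1 < n) {α : Fin n → ℕ} (hα : ∀ i, 0 < α i) :
    ∏ i : Fin n, slotCoeff a₁ a₂ i (α i) = compWeight a₁ a₂ α := by
  have entry (i : Fin n) : α i = ext α i := by simp [_root_.ext]
  have positive (r : ℕ) (hr : r < n) : ext α r - 1 + 1 = ext α r :=
    Nat.sub_add_cancel (entry ⟨r, hr⟩ ▸ hα ⟨r, hr⟩)
  have exponent : ∑ r ∈ Icc (a₁ + 1) (a₁ + a₂ + 1), (ext α r - 1) =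
      (∑ r ∈ Icc (a₁ + 1) (a₁ + a₂ + 1), ext α r) - 1 - a₂ := by
    rw [← sum_congr rfl fun r hr => positive r (by rw [mem_Icc] at hr; omega), sum_add_distrib,
      sum_const, Nat.card_Icc, smul_eq_mul, mul_one]
    omega
  have block : Icc (a₁ + 1) (a₁ + a₂ + 1) ⊆ range n := fun r hr => by
    rw [mem_Icc] at hr; rw [mem_range]; omega
  simp only [slotCoeff, entry]
  rw [Fin.prod_univ_eq_prod_range (fun r => (if r ∈ Icc (a₁ + 1) (a₁ + a₂ + 1) then
      (2 : ℝ) ^ (ext α r - 1) else 1) * if r = a₁ + a₂ + 1 then 1 - 2 ^ ((1 : ℤ) - ext α r) else 1),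
    prod_mul_distrib, prod_ite_mem, inter_eq_right.2 block, prod_pow_eq_pow_sum, exponent,
    prod_ite_eq', if_pos (mem_range.2 h), compWeight]

theorem compWeight_nonneg {n a₁ a₂ : ℕ} (h : a₁ + a₂ + 1 < n) {α : Fin n → ℕ}
    (hα : ∀ i, 0 < α i) : 0 ≤ compWeight a₁ a₂ α := by
  rw [← prod_slotCoeff h hα]
  exact prod_nonneg fun i _ => slotCoeff_nonneg _ _ _ (hα i)

/-- The sum of `compWeight a₁ a₂ α * emzv (incLast α)` over the compositions of `n + m` into `n`
parts. -/
noncomputable def weightedSum (a₁ a₂ n m : ℕ) : ℝ≥0∞ :=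
  ∑' α : Comp n (n + m), ENNReal.ofReal (compWeight a₁ a₂ α.1) * emzv (incLast α.1)

theorem tsum_pow_mul_weightedSum (hx0 : 0 ≤ x) (hx : 2 * x < 1) (a₁ a₂ a₃ : ℕ) :
    ∑' m, ENNReal.ofReal x ^ m * weightedSum a₁ a₂ (a₁ + a₂ + a₃ + 2) m =
      ENNReal.ofReal x * pairing 1 (eulerResolvent 0 (blockChain x a₁ a₂ a₃)) := by
  rw [← nestedSum_slotWeight hx (by linarith), nestedSum_eq_tsum_comp
    (c := fun r t => ENNReal.ofReal (slotCoeff a₁ a₂ r t))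
    fun r q hq => (tsum_slotCoeff hx0 hx a₁ a₂ r hq).symm]
  refine tsum_congr fun m => congrArg _ (tsum_congr fun α => ?_)
  rw [← prod_slotCoeff (by omega) α.2.1, ENNReal.ofReal_prod_of_nonneg fun i _ =>
    slotCoeff_nonneg _ _ _ (α.2.1 i)]

theorem weightedSum_ne_top (a₁ a₂ a₃ m : ℕ) : weightedSum a₁ a₂ (a₁ + a₂ + a₃ + 2) m ≠ ∞ := by
  have generating := tsum_pow_mul_weightedSum (x := 1 / 4) (by norm_num) (by norm_num) a₁ a₂ a₃
  have finite := ENNReal.ne_top_of_tsum_ne_top (generating ▸ ENNReal.mul_ne_top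
    ENNReal.ofReal_ne_top (pairing_one_blockChain_ne_top (by norm_num) (by norm_num) _ _ _)) m
  exact fun h => finite (by rw [h, ENNReal.mul_top (by positivity)])

theorem hasSum_compWeight_mul_mzv (a₁ a₂ a₃ m : ℕ) :
    HasSum (fun α : Comp (a₁ + a₂ + a₃ + 2) (a₁ + a₂ + a₃ + 2 + m) =>
      compWeight a₁ a₂ α.1 * mzv (incLast α.1))
      (weightedSum a₁ a₂ (a₁ + a₂ + a₃ + 2) m).toReal := by
  have finite := weightedSum_ne_top a₁ a₂ a₃ m
  have total := ENNReal.hasSum_toReal finite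
  rw [← ENNReal.tsum_toReal_eq (ENNReal.ne_top_of_tsum_ne_top finite)] at total
  refine total.congr_fun fun α => ?_
  rw [ENNReal.toReal_mul, toReal_emzv,
    ENNReal.toReal_ofReal (compWeight_nonneg (by omega) α.2.1)]

theorem hasSum_weightedSum_mul_pow (hx0 : 0 < x) (hx : 2 * x < 1) (a₁ a₂ a₃ : ℕ) :
    HasSum (fun m => (weightedSum a₁ a₂ (a₁ + a₂ + a₃ + 2) m).toReal * x ^ m)
      (x * (pairing 1 (eulerResolvent 0 (blockChain x a₁ a₂ a₃))).toReal) := by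
  rw [← ENNReal.toReal_ofReal_mul _ _ hx0.le]
  exact hasSum_toReal_mul_pow hx0.le (tsum_pow_mul_weightedSum hx0.le hx a₁ a₂ a₃)
    (ENNReal.mul_ne_top ENNReal.ofReal_ne_top (pairing_one_blockChain_ne_top hx0 hx a₁ a₂ a₃))

theorem hasSum_natCast_mul_mzv_mul_pow (hx0 : 0 ≤ x) (hx : x < 1) (k : ℕ) :
    HasSum (fun m : ℕ => m * mzv ![k + m + 3] * x ^ m) (x * (doublePoleSum x k).toReal) := by
  rw [← ENNReal.toReal_ofReal_mul _ _ hx0]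
  have finite := ENNReal.mul_ne_top (ENNReal.ofReal_ne_top (r := x)) (doublePoleSum_ne_top hx0 hx k)
  refine (hasSum_toReal_mul_pow hx0 (tsum_pow_mul_natCast_mul_emzv hx0 hx k) finite).congr_fun
    fun m => ?_
  rw [ENNReal.toReal_mul, ENNReal.toReal_natCast, toReal_emzv]

theorem sum_toReal_weightedSum (k : ℕ) (s t : ℝ) (m : ℕ) :
    ∑ a ∈ antidiagonal k, ∑ b ∈ antidiagonal a.2,
        ((s ^ a.1 + t ^ a.1) * (s + t) ^ b.1 * (s ^ b.2 + t ^ b.2)) *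
          (weightedSum a.1 b.1 (k + 2) m).toReal =
      m * mzv ![k + m + 3] * ∑ a ∈ antidiagonal k, s ^ a.1 * t ^ a.2 := by
  revert m
  refine congrFun (eq_of_hasSum_mul_pow (r := 1 / 2) one_half_pos fun x hx0 hx =>
    ⟨x * (doublePoleSum x k).toReal * ∑ a ∈ antidiagonal k, s ^ a.1 * t ^ a.2, ?_, ?_⟩)
  · have hx : 2 * x < 1 := by linarith
    rw [mul_assoc, ← sum_toReal_pairing_one_blockChain hx0 hx]
    simp only [sum_mul, mul_sum]
    refine hasSum_sum fun a ha => hasSum_sum fun b hb => ?_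
    obtain rfl : k = a.1 + b.1 + b.2 := by rw [HasAntidiagonal.mem_antidiagonal] at ha hb; omega
    rw [mul_left_comm]
    simp only [mul_assoc _ _ (x ^ _)]
    exact (hasSum_weightedSum_mul_pow hx0 hx a.1 b.1 b.2).mul_left _
  · exact ((hasSum_natCast_mul_mzv_mul_pow hx0.le (by linarith) k).mul_right _).congr_fun fun m =>
      mul_right_comm _ _ _

theorem hasSum_sum_compWeight_mul_mzv (k : ℕ) (s t : ℝ) (m : ℕ) :
    HasSum (fun α : Comp (k + 2) (k + 2 + m) =>
      ∑ a ∈ antidiagonal k, ∑ b ∈ antidiagonal a.2,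
        ((s ^ a.1 + t ^ a.1) * (s + t) ^ b.1 * (s ^ b.2 + t ^ b.2)) *
          (compWeight a.1 b.1 α.1 * mzv (incLast α.1)))
      (m * mzv ![k + m + 3] * ∑ a ∈ antidiagonal k, s ^ a.1 * t ^ a.2) := by
  rw [← sum_toReal_weightedSum]
  refine hasSum_sum fun a ha => hasSum_sum fun b hb => ?_
  obtain rfl : k = a.1 + b.1 + b.2 := by rw [HasAntidiagonal.mem_antidiagonal] at ha hb; omega
  exact (hasSum_compWeight_mul_mzv a.1 b.1 b.2 m).mul_left _

end GeneratingFunction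

end MultipleZeta

theorem parameter_specialization (k ℓ : ℕ) (μ₁ μ₂ : ℝ) :
    (∑' α : Comp (k + 2) (k + ℓ + 3),
      ∑ a ∈ antidiagonal k, ∑ a' ∈ antidiagonal a.2,
        (μ₁ ^ a.1 + μ₂ ^ a.1) * (μ₁ + μ₂) ^ a'.1 * (μ₁ ^ a'.2 + μ₂ ^ a'.2) *
          (2 : ℝ) ^ ((∑ r ∈ Finset.Icc (a.1 + 1) (a.1 + a'.1 + 1), ext α.1 r)
              - 1 - a'.1) *
          (1 - (2 : ℝ) ^ ((1 : ℤ) - (ext α.1 (a.1 + a'.1 + 1) : ℤ))) *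
          mzv (incLast α.1)) =
    (ℓ + 1 : ℝ) * mzv ![k + ℓ + 4] *
      ∑ a ∈ antidiagonal k, μ₁ ^ a.1 * μ₂ ^ a.2 := by
  have total := MultipleZeta.hasSum_sum_compWeight_mul_mzv k μ₁ μ₂ (ℓ + 1)
  rw [show k + 2 + (ℓ + 1) = k + ℓ + 3 by ring, show k + (ℓ + 1) + 3 = k + ℓ + 4 by ring,
    Nat.cast_succ] at total
  rw [← total.tsum_eq]
  simp only [MultipleZeta.compWeight, mul_assoc]
end

section
/- Ohno's relation in a special case: for nonnegative integers a_1, a_2 and ℓ ≥ 0, ∑_{b_1+b_2=ℓ} ∑_{|α|=a_1+b_1+1, |β|=a_2+b_2+1} ζ(α_0,...,α_{a_1}+1, β_0,...,β_{a_2}+1) = ∑_{b_1+b_2=ℓ} ζ(a_2+b_2+2, a_1+b_1+2). -/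
open Finset

/-!
By the geometric series, the generating function `∑_N x^N ∑_{|e| = N} ζ(k + e)` is the nested sum in
which the entry `kᵢ` contributes the weight `1 / ((a - x) a^(kᵢ - 1))`. It is therefore the value
at `0` of a word in two operators, the tail sum `∑_{a > m} f(a) / (a - x)` and the division by the
index, applied to the constant `1`. The connector `C(m, n) = (1 - x)ₘ (1 - x)ₙ / (1 - x)ₘ₊ₙ`
satisfies `∑_{a > m} C(a, n) / (a - x) = C(m, n) / n` by telescoping. As `C` is symmetric, the
transform with kernel `C` intertwines division by the index with the tail sum, and the transpose
of the tail sum with division by the index. Moving a whole word across the connector thus reverses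
it and exchanges its two letters, which is the duality of indices: dual indices have the same
generating function, and the comparison of the coefficients of `x^N` is Ohno's relation. The index
`({1}^a₁, 2, {1}^a₂, 2)` has the dual `(a₂ + 2, a₁ + 2)`.
-/

namespace Ohno

open Filter Function
open scoped ENNReal NNReal Topology

/-! ### Tail sums and their transposes -/

/-- The weighted tail sum `m ↦ ∑_{a > m} f(a) / (a - x)`. -/
noncomputable def tailSum (x : ℝ≥0) (f : ℕ → ℝ≥0∞) (m : ℕ) : ℝ≥0∞ :=
  ∑' a : Set.Ioi m, ((a : ℕ) - x : ℝ≥0∞)⁻¹ * f a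

/-- The weighted head sum `c ↦ (∑_{b < c} w(b)) / (c - x)`, the transpose of `tailSum x`. -/
noncomputable def headSum (x : ℝ≥0) (w : ℕ → ℝ≥0∞) (c : ℕ) : ℝ≥0∞ :=
  (c - x : ℝ≥0∞)⁻¹ * ∑ b ∈ range c, w b

/-- Division of a sequence by its index. At index `0` the value is `⊤` or `0`, by the conventions
of `ℝ≥0∞`; these are the values for which `connectedSum` intertwines the operators at `0` too. -/
noncomputable def divIndex (f : ℕ → ℝ≥0∞) (n : ℕ) : ℝ≥0∞ :=
  (n : ℝ≥0∞)⁻¹ * f n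

/-- The bilinear pairing `∑ₙ f(n) w(n)` of two sequences. -/
noncomputable def pairing (f w : ℕ → ℝ≥0∞) : ℝ≥0∞ :=
  ∑' n, f n * w n

theorem pairing_divIndex (f w : ℕ → ℝ≥0∞) :
    pairing f (divIndex w) = pairing (divIndex f) w :=
  tsum_congr fun n ↦ by simp only [divIndex]; ring

theorem pairing_headSum (x : ℝ≥0) (f w : ℕ → ℝ≥0∞) :
    pairing f (headSum x w) = pairing (tailSum x f) w := by
  have head (c : ℕ) : f c * headSum x w c =
      ∑' b, (Set.Ioi b).indicator (fun a : ℕ ↦ (a - x : ℝ≥0∞)⁻¹ * f a) c * w b := by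
    rw [tsum_eq_sum (s := range c) fun b hb ↦ by
      rw [Set.indicator_of_notMem (by simpa using hb), zero_mul], headSum, mul_left_comm,
      ← mul_assoc, mul_sum]
    exact sum_congr rfl fun b hb ↦ by rw [Set.indicator_of_mem (by simpa using hb)]
  simp only [pairing, head, tailSum]
  rw [ENNReal.tsum_comm]
  exact tsum_congr fun b ↦ by rw [ENNReal.tsum_mul_right, ← _root_.tsum_subtype]

theorem pairing_iterate {S T : (ℕ → ℝ≥0∞) → ℕ → ℝ≥0∞}
    (h : ∀ f w, pairing f (S w) = pairing (T f) w) (n : ℕ) (f w : ℕ → ℝ≥0∞) :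
    pairing f (S^[n] w) = pairing (T^[n] f) w := by
  induction n generalizing f with
  | zero => rfl
  | succ n ih => rw [iterate_succ_apply', h, ih, iterate_succ_apply]

theorem pairing_single_zero (f : ℕ → ℝ≥0∞) : pairing f (Pi.single 0 1) = f 0 := by
  rw [pairing, tsum_eq_single 0 fun n hn ↦ by simp [hn], Pi.single_eq_same, mul_one]

theorem tailSum_mono {x : ℝ≥0} {f g : ℕ → ℝ≥0∞} {m : ℕ} (h : ∀ a > m, f a ≤ g a) :
    tailSum x f m ≤ tailSum x g m :=
  ENNReal.tsum_le_tsum fun a ↦ mul_le_mul_right (h a a.2) _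

theorem tailSum_const_mul (x : ℝ≥0) (c : ℝ≥0∞) (f : ℕ → ℝ≥0∞) (m : ℕ) :
    tailSum x (fun a ↦ c * f a) m = c * tailSum x f m := by
  simp only [tailSum, mul_left_comm _ c, ENNReal.tsum_mul_left]

theorem tailSum_eq_tsum_add (x : ℝ≥0) (f : ℕ → ℝ≥0∞) (m : ℕ) :
    tailSum x f m = ∑' k : ℕ, ((m + k + 1 : ℕ) - x : ℝ≥0∞)⁻¹ * f (m + k + 1) := by
  have h : Set.Ioi m = Set.range fun k ↦ m + k + 1 := by
    ext a
    exact ⟨fun ha ↦ ⟨a - m - 1, by simp only [Set.mem_Ioi] at ha ⊢; omega⟩, by grind⟩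
  rw [tailSum, h]
  exact tsum_range (fun a : ℕ ↦ (a - x : ℝ≥0∞)⁻¹ * f a) fun _ _ ↦ by simp

theorem tailSum_one (x : ℝ≥0) (m : ℕ) : tailSum x 1 m = ⊤ := by
  have harmonic : ∑' k : ℕ, ((k + (m + 1) : ℕ) : ℝ≥0∞)⁻¹ = ⊤ := by
    by_contra h
    refine (summable_nat_add_iff (m + 1)).not.2 Real.not_summable_natCast_inv ?_
    simpa only [ENNReal.toReal_inv, ENNReal.toReal_natCast] using ENNReal.summable_toReal h
  rw [tailSum_eq_tsum_add, ← top_le_iff, ← harmonic]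
  refine ENNReal.tsum_le_tsum fun k ↦ ?_
  rw [Pi.one_apply, mul_one, add_comm k, add_right_comm]
  exact ENNReal.inv_le_inv.2 tsub_le_self

/-! ### The connector -/

/-- The connector `(1 - x)ₘ (1 - x)ₙ / (1 - x)ₘ₊ₙ` of Seki and Yamamoto, where `(s)ₘ` is the rising
factorial; in terms of the Gamma function it is
`Γ(m + 1 - x) Γ(n + 1 - x) / (Γ(1 - x) Γ(m + n + 1 - x))`. -/
noncomputable def connector (x : ℝ≥0) (m n : ℕ) : ℝ :=
  (ascPochhammer ℝ m).eval (1 - x : ℝ) * (ascPochhammer ℝ n).eval (1 - x : ℝ) /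
    (ascPochhammer ℝ (m + n)).eval (1 - x : ℝ)

theorem connector_comm (x : ℝ≥0) (m n : ℕ) : connector x m n = connector x n m := by
  simp only [connector, add_comm, mul_comm]

section

variable {x : ℝ≥0}

theorem ascPochhammer_eval_one_sub_pos (hx : x < 1) (m : ℕ) :
    0 < (ascPochhammer ℝ m).eval (1 - x : ℝ) :=
  ascPochhammer_pos m _ (sub_pos.2 hx)

theorem natCast_add_one_sub_pos (hx : x < 1) (m : ℕ) : (0 : ℝ) < m + 1 - x := by
  have : (x : ℝ) < 1 := hx
  have : (0 : ℝ) ≤ m := m.cast_nonneg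
  linarith

theorem connector_pos (hx : x < 1) (m n : ℕ) : 0 < connector x m n :=
  div_pos (mul_pos (ascPochhammer_eval_one_sub_pos hx m) (ascPochhammer_eval_one_sub_pos hx n))
    (ascPochhammer_eval_one_sub_pos hx _)

theorem connector_zero_right (hx : x < 1) (m : ℕ) : connector x m 0 = 1 := by
  simp [connector, (ascPochhammer_eval_one_sub_pos hx m).ne']

theorem connector_one_right (hx : x < 1) (m : ℕ) :
    connector x m 1 = (1 - x) / (m + 1 - x) := by
  have h₀ := (ascPochhammer_eval_one_sub_pos hx m).ne'
  have h₁ := (natCast_add_one_sub_pos hx m).ne'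
  rw [connector, ascPochhammer_one, Polynomial.eval_X, ascPochhammer_succ_eval,
    show (1 - x + m : ℝ) = m + 1 - x by ring]
  field_simp

theorem connector_sub_connector_succ (hx : x < 1) (m n : ℕ) :
    connector x m n - connector x (m + 1) n = n * (connector x (m + 1) n / (m + 1 - x)) := by
  have h₀ := (ascPochhammer_eval_one_sub_pos hx (m + n)).ne'
  have h₁ := (natCast_add_one_sub_pos hx m).ne'
  have h₂ := (natCast_add_one_sub_pos hx (m + n)).ne'
  rw [connector, connector, Nat.add_right_comm, ascPochhammer_succ_eval, ascPochhammer_succ_eval,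
    show (1 - x + m : ℝ) = m + 1 - x by ring,
    show (1 - x + (m + n : ℕ) : ℝ) = (m + n : ℕ) + 1 - x by ring]
  field_simp
  push_cast
  ring

theorem connector_antitone_left (hx : x < 1) (n : ℕ) : Antitone fun m ↦ connector x m n :=
  antitone_nat_of_succ_le fun m ↦ sub_nonneg.1 <| by
    rw [connector_sub_connector_succ hx]
    have := connector_pos hx (m + 1) n
    have := natCast_add_one_sub_pos hx m
    positivity

theorem tendsto_connector_atTop (hx : x < 1) {n : ℕ} (hn : 0 < n) :
    Tendsto (fun m ↦ connector x m n) atTop (𝓝 0) := by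
  have le_one (m : ℕ) : connector x m n ≤ connector x m 1 := by
    simpa only [connector_comm x m] using connector_antitone_left hx m hn
  refine squeeze_zero (fun m ↦ (connector_pos hx m n).le) le_one ?_
  simp only [connector_one_right hx, add_sub_assoc]
  exact tendsto_const_nhds.div_atTop
    (tendsto_atTop_add_const_right _ _ tendsto_natCast_atTop_atTop)

theorem hasSum_connector_div (hx : x < 1) (m : ℕ) {n : ℕ} (hn : 0 < n) :
    HasSum (fun k : ℕ ↦ connector x (m + k + 1) n / ((m + k : ℕ) + 1 - x))
      (connector x m n / n) := by
  rw [hasSum_iff_tendsto_nat_of_nonneg fun k ↦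
    (div_pos (connector_pos hx _ _) (natCast_add_one_sub_pos hx _)).le]
  have partialSum (K : ℕ) : ∑ k ∈ range K, connector x (m + k + 1) n / ((m + k : ℕ) + 1 - x) =
      (connector x m n - connector x (m + K) n) / n := by
    have term (k : ℕ) : connector x (m + k + 1) n / ((m + k : ℕ) + 1 - x) =
        (connector x (m + k) n - connector x (m + (k + 1)) n) / n := by
      rw [← add_assoc, connector_sub_connector_succ hx]
      field_simp
    simp only [term, ← sum_div, sum_range_sub' fun k ↦ connector x (m + k) n, add_zero]
  simp only [partialSum]
  have vanish : Tendsto (fun K ↦ connector x (m + K) n) atTop (𝓝 0) := by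
    simpa only [add_comm m] using (tendsto_add_atTop_iff_nat m).2 (tendsto_connector_atTop hx hn)
  simpa using (vanish.const_sub (connector x m n)).div_const (n : ℝ)

theorem tailSum_connector (hx : x < 1) (m n : ℕ) :
    tailSum x (fun a ↦ ENNReal.ofReal (connector x a n)) m =
      (n : ℝ≥0∞)⁻¹ * ENNReal.ofReal (connector x m n) := by
  rcases n.eq_zero_or_pos with rfl | hn
  · simpa [connector_zero_right hx] using! tailSum_one x m
  have term (k : ℕ) : ((m + k + 1 : ℕ) - x : ℝ≥0∞)⁻¹ * ENNReal.ofReal (connector x (m + k + 1) n) =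
      ENNReal.ofReal (connector x (m + k + 1) n / ((m + k : ℕ) + 1 - x)) := by
    have pos := natCast_add_one_sub_pos hx (m + k)
    rw [ENNReal.ofReal_div_of_pos pos, ENNReal.ofReal_sub _ x.coe_nonneg, mul_comm, div_eq_mul_inv,
      ENNReal.ofReal_coe_nnreal, ← Nat.cast_add_one, ENNReal.ofReal_natCast]
  have sum := hasSum_connector_div hx m hn
  rw [tailSum_eq_tsum_add, tsum_congr term, ← ENNReal.ofReal_tsum_of_nonneg
    (fun k ↦ (div_pos (connector_pos hx _ _) (natCast_add_one_sub_pos hx _)).le) sum.summable,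
    sum.tsum_eq, ENNReal.ofReal_div_of_pos (Nat.cast_pos.2 hn), ENNReal.ofReal_natCast, mul_comm,
    div_eq_mul_inv]

/-- The connected sum `m ↦ ∑ₙ C(m, n) w(n)` formed with the connector `C`. -/
noncomputable def connectedSum (x : ℝ≥0) (w : ℕ → ℝ≥0∞) (m : ℕ) : ℝ≥0∞ :=
  pairing (fun n ↦ ENNReal.ofReal (connector x m n)) w

theorem connectedSum_single_zero (hx : x < 1) : connectedSum x (Pi.single 0 1) = 1 := by
  funext m
  rw [connectedSum, pairing_single_zero, connector_zero_right hx, ENNReal.ofReal_one, Pi.one_apply]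

theorem connectedSum_zero (hx : x < 1) (w : ℕ → ℝ≥0∞) :
    connectedSum x w 0 = pairing 1 w := by
  simp only [connectedSum, connector_comm x 0, connector_zero_right hx, ENNReal.ofReal_one]
  rfl

theorem connectedSum_divIndex (hx : x < 1) :
    Semiconj (connectedSum x) divIndex (tailSum x) := fun w ↦ by
  funext m
  have swap : tailSum x (connectedSum x w) m =
      ∑' n, tailSum x (fun a ↦ ENNReal.ofReal (connector x a n)) m * w n := by
    simp only [connectedSum, pairing, tailSum, ← ENNReal.tsum_mul_left, ← ENNReal.tsum_mul_right]
    rw [ENNReal.tsum_comm]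
    simp only [mul_assoc]
  simp only [swap, tailSum_connector hx, connectedSum, pairing, divIndex]
  exact tsum_congr fun n ↦ by ring

theorem connectedSum_headSum (hx : x < 1) :
    Semiconj (connectedSum x) (headSum x) divIndex := fun w ↦ by
  funext m
  have tail : tailSum x (fun n ↦ ENNReal.ofReal (connector x m n)) =
      fun n ↦ (m : ℝ≥0∞)⁻¹ * ENNReal.ofReal (connector x m n) := by
    funext n
    simpa only [connector_comm x m] using tailSum_connector hx n m
  rw [connectedSum, pairing_headSum, tail]
  simp only [pairing, mul_assoc, ENNReal.tsum_mul_left, divIndex, connectedSum]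

/-- The factor of the block `({1}ᵃ, b + 2)`, where `p = (a, b)`, in the word of operators that
computes the generating function `∑_N x^N ∑_{|e| = N} ζ(k + e)` of an index `k`. -/
noncomputable def blockOp (x : ℝ≥0) (p : ℕ × ℕ) : (ℕ → ℝ≥0∞) → ℕ → ℝ≥0∞ :=
  (tailSum x)^[p.1 + 1] ∘ divIndex^[p.2 + 1]

/-- The operator that `connectedSum x` intertwines with `blockOp x p`; it is the transpose of the
operator of the dual block `p.swap`. -/
noncomputable def coblockOp (x : ℝ≥0) (p : ℕ × ℕ) : (ℕ → ℝ≥0∞) → ℕ → ℝ≥0∞ :=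
  divIndex^[p.1 + 1] ∘ (headSum x)^[p.2 + 1]

theorem connectedSum_coblockOp (hx : x < 1) (p : ℕ × ℕ) :
    Semiconj (connectedSum x) (coblockOp x p) (blockOp x p) :=
  ((connectedSum_divIndex hx).iterate_right _).comp_right
    ((connectedSum_headSum hx).iterate_right _)

theorem pairing_coblockOp (x : ℝ≥0) (p : ℕ × ℕ) (f w : ℕ → ℝ≥0∞) :
    pairing f (coblockOp x p w) = pairing (blockOp x p.swap f) w := by
  rw [coblockOp, comp_apply, pairing_iterate pairing_divIndex,
    pairing_iterate (pairing_headSum x)]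
  rfl

/-- The dual of an admissible index, both given by their lists of blocks: the blocks `({1}ᵃ, b + 2)`
become `({1}ᵇ, a + 2)`, in reverse order. -/
def dual (l : List (ℕ × ℕ)) : List (ℕ × ℕ) :=
  (l.map Prod.swap).reverse

theorem pairing_foldr_coblockOp (x : ℝ≥0) (l : List (ℕ × ℕ)) (f w : ℕ → ℝ≥0∞) :
    pairing f (l.foldr (coblockOp x) w) = pairing ((dual l).foldr (blockOp x) f) w := by
  induction l generalizing f with
  | nil => rfl
  | cons p l ih => rw [List.foldr_cons, pairing_coblockOp, ih]; simp [dual]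

theorem foldr_blockOp_dual (hx : x < 1) (l : List (ℕ × ℕ)) :
    (dual l).foldr (blockOp x) 1 0 = l.foldr (blockOp x) 1 0 :=
  calc (dual l).foldr (blockOp x) 1 0
    _ = pairing 1 (l.foldr (coblockOp x) (Pi.single 0 1)) := by
      rw [pairing_foldr_coblockOp, pairing_single_zero]
    _ = connectedSum x (l.foldr (coblockOp x) (Pi.single 0 1)) 0 :=
      (connectedSum_zero hx _).symm
    _ = l.foldr (blockOp x) 1 0 := by
      rw [← List.foldr_hom (connectedSum x) fun p w ↦ (connectedSum_coblockOp hx p w).symm,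
        connectedSum_single_zero hx]

/-! ### Finiteness -/

theorem inv_natCast_le_connector_one (hx : x < 1) {a : ℕ} (ha : 0 < a) :
    (a : ℝ≥0∞)⁻¹ ≤ ENNReal.ofReal (2 / (1 - x)) * ENNReal.ofReal (connector x a 1) := by
  have hx' : (0 : ℝ) < 1 - x := sub_pos.2 hx
  have ha' : (1 : ℝ) ≤ a := Nat.one_le_cast.2 ha
  have pos := natCast_add_one_sub_pos hx a
  rw [← ENNReal.ofReal_mul (by positivity), connector_one_right hx, ← ENNReal.ofReal_natCast,
    ← ENNReal.ofReal_inv_of_pos (by positivity)]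
  refine ENNReal.ofReal_le_ofReal ?_
  rw [div_mul_div_cancel₀ hx'.ne', inv_eq_one_div, div_le_div_iff₀ (by positivity) pos]
  linarith [x.coe_nonneg]

theorem iterate_divIndex (n : ℕ) (f : ℕ → ℝ≥0∞) (a : ℕ) :
    divIndex^[n] f a = (a : ℝ≥0∞)⁻¹ ^ n * f a := by
  induction n with
  | zero => simp
  | succ n ih => rw [iterate_succ_apply', divIndex, ih, pow_succ', mul_assoc]

theorem tailSum_le (hx : x < 1) {c : ℝ≥0∞} {f : ℕ → ℝ≥0∞}
    (hf : ∀ a > 0, f a ≤ c * ENNReal.ofReal (connector x a 1)) (m : ℕ) :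
    tailSum x f m ≤ c * ENNReal.ofReal (connector x m 1) :=
  calc tailSum x f m
    _ ≤ tailSum x (fun a ↦ c * ENNReal.ofReal (connector x a 1)) m :=
      tailSum_mono fun a ha ↦ hf a (by omega)
    _ = c * ENNReal.ofReal (connector x m 1) := by
      rw [tailSum_const_mul, tailSum_connector hx, Nat.cast_one, inv_one, one_mul]

theorem iterate_tailSum_le (hx : x < 1) {c : ℝ≥0∞} {f : ℕ → ℝ≥0∞}
    (hf : ∀ a > 0, f a ≤ c * ENNReal.ofReal (connector x a 1)) (n m : ℕ) :
    (tailSum x)^[n + 1] f m ≤ c * ENNReal.ofReal (connector x m 1) := by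
  induction n generalizing f with
  | zero => exact tailSum_le hx hf m
  | succ _ ih => exact ih fun a _ ↦ tailSum_le hx hf a

theorem blockOp_le (hx : x < 1) (p : ℕ × ℕ) {c : ℝ≥0∞} {f : ℕ → ℝ≥0∞}
    (hf : ∀ a, f a ≤ c) (m : ℕ) : blockOp x p f m ≤ c * ENNReal.ofReal (2 / (1 - x)) := by
  have div_le (a : ℕ) (ha : a > 0) : divIndex^[p.2 + 1] f a ≤
      c * ENNReal.ofReal (2 / (1 - x)) * ENNReal.ofReal (connector x a 1) := by
    have inv_le_one : (a : ℝ≥0∞)⁻¹ ≤ 1 := ENNReal.inv_le_one.2 (Nat.one_le_cast.2 ha)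
    calc divIndex^[p.2 + 1] f a
      _ = (a : ℝ≥0∞)⁻¹ ^ (p.2 + 1) * f a := iterate_divIndex _ _ _
      _ ≤ (a : ℝ≥0∞)⁻¹ * c := by
        gcongr
        · exact pow_le_of_le_one zero_le inv_le_one p.2.succ_ne_zero
        · exact hf a
      _ ≤ c * ENNReal.ofReal (2 / (1 - x)) * ENNReal.ofReal (connector x a 1) := by
        rw [mul_comm, mul_assoc]
        gcongr
        exact inv_natCast_le_connector_one hx ha
  have connector_le_one : connector x m 1 ≤ 1 := by
    simpa [connector_comm x 0, connector_zero_right hx] using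
      connector_antitone_left hx 1 m.zero_le
  refine (iterate_tailSum_le hx div_le p.1 m).trans (mul_le_of_le_one_right' ?_)
  exact ENNReal.ofReal_le_one.2 connector_le_one

theorem foldr_blockOp_ne_top (hx : x < 1) (l : List (ℕ × ℕ)) (m : ℕ) :
    l.foldr (blockOp x) 1 m ≠ ⊤ := by
  suffices ∃ c ≠ (⊤ : ℝ≥0∞), ∀ m, l.foldr (blockOp x) 1 m ≤ c by
    obtain ⟨c, hc, hle⟩ := this
    exact ne_top_of_le_ne_top hc (hle m)
  induction l with
  | nil => exact ⟨1, ENNReal.one_ne_top, fun _ ↦ le_rfl⟩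
  | cons p l ih =>
    obtain ⟨c, hc, hle⟩ := ih
    exact ⟨_, ENNReal.mul_ne_top hc ENNReal.ofReal_ne_top, blockOp_le hx p hle⟩

end

/-! ### Generating functions of multiple zeta values -/

/-- The index of a multiple zeta value described by a list of blocks, where the pair `(a, b)` stands
for the block `({1}ᵃ, b + 2)`. -/
def blockIndex (l : List (ℕ × ℕ)) : List ℕ :=
  l.flatMap fun p ↦ List.replicate p.1 1 ++ [p.2 + 2]

theorem pos_of_mem_blockIndex {l : List (ℕ × ℕ)} {k : ℕ} (hk : k ∈ blockIndex l) : 0 < k := by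
  simp only [blockIndex, List.mem_flatMap, List.mem_append, List.mem_replicate,
    List.mem_singleton] at hk
  obtain ⟨_, _, ⟨_, rfl⟩ | rfl⟩ := hk <;> omega

/-- The contribution of a single entry `k` of the index to the operator `blockOp`. -/
noncomputable def entryOp (x : ℝ≥0) (k : ℕ) : (ℕ → ℝ≥0∞) → ℕ → ℝ≥0∞ :=
  tailSum x ∘ divIndex^[k - 1]

theorem foldr_entryOp_replicate_one (x : ℝ≥0) (a : ℕ) (f : ℕ → ℝ≥0∞) :
    (List.replicate a 1).foldr (entryOp x) f = (tailSum x)^[a] f := by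
  induction a with
  | zero => rfl
  | succ a ih => rw [List.replicate_succ, List.foldr_cons, ih, iterate_succ_apply']; rfl

theorem foldr_entryOp_blockIndex (x : ℝ≥0) (l : List (ℕ × ℕ)) (f : ℕ → ℝ≥0∞) :
    (blockIndex l).foldr (entryOp x) f = l.foldr (blockOp x) f := by
  induction l with
  | nil => rfl
  | cons p l ih =>
    rw [blockIndex, List.flatMap_cons, List.foldr_append, ← blockIndex, ih, List.foldr_append,
      foldr_entryOp_replicate_one]
    rfl

/-- The nested sum `∑_{m < ℓ₀ < ⋯ < ℓ_{n-1}} ∏ᵢ wᵢ(ℓᵢ)`. -/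
noncomputable def nestedSum {n : ℕ} (w : Fin n → ℕ → ℝ≥0∞) (m : ℕ) : ℝ≥0∞ :=
  ∑' ℓ : {ℓ : Fin n → ℕ // StrictMono ℓ ∧ ∀ i, m < ℓ i}, ∏ i, w i (ℓ.1 i)

theorem nestedSum_zero (w : Fin 0 → ℕ → ℝ≥0∞) (m : ℕ) : nestedSum w m = 1 := by
  have : Unique {ℓ : Fin 0 → ℕ // StrictMono ℓ ∧ ∀ i, m < ℓ i} :=
    { default := ⟨Fin.elim0, fun i ↦ i.elim0, fun i ↦ i.elim0⟩
      uniq := fun _ ↦ Subsingleton.elim _ _ }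
  simp only [nestedSum, Fin.prod_univ_zero, tsum_fintype, Fintype.sum_unique]

theorem strictMono_cons_and_lt_iff {n a m : ℕ} {ℓ : Fin n → ℕ} :
    (StrictMono (Fin.cons a ℓ : Fin (n + 1) → ℕ) ∧
      ∀ i, m < (Fin.cons a ℓ : Fin (n + 1) → ℕ) i) ↔
    m < a ∧ StrictMono ℓ ∧ ∀ i, a < ℓ i := by
  rw [Fin.strictMono_cons, Fin.forall_fin_succ]
  simp only [Fin.cons_zero, Fin.cons_succ]
  grind

/-- Splits the first entry off a strictly increasing tuple with entries above `m`. -/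
def strictMonoConsEquiv (n m : ℕ) :
    (Σ a : Set.Ioi m, {ℓ : Fin n → ℕ // StrictMono ℓ ∧ ∀ i, (a : ℕ) < ℓ i}) ≃
      {ℓ : Fin (n + 1) → ℕ // StrictMono ℓ ∧ ∀ i, m < ℓ i} where
  toFun s := ⟨Fin.cons s.1.1 s.2.1, strictMono_cons_and_lt_iff.2 ⟨s.1.2, s.2.2⟩⟩
  invFun ℓ :=
    have h := strictMono_cons_and_lt_iff.1 <| (Fin.cons_self_tail ℓ.1).symm ▸ ℓ.2
    ⟨⟨ℓ.1 0, h.1⟩, Fin.tail ℓ.1, h.2⟩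
  left_inv _ := rfl
  right_inv ℓ := Subtype.ext (Fin.cons_self_tail ℓ.1)

theorem nestedSum_succ {n : ℕ} (w : Fin (n + 1) → ℕ → ℝ≥0∞) (m : ℕ) :
    nestedSum w m = ∑' a : Set.Ioi m, w 0 a * nestedSum (Fin.tail w) a := by
  rw [nestedSum, ← (strictMonoConsEquiv n m).tsum_eq, ENNReal.tsum_sigma']
  refine tsum_congr fun a ↦ ?_
  rw [nestedSum, ← ENNReal.tsum_mul_left]
  exact tsum_congr fun ℓ ↦ by rw [Fin.prod_univ_succ]; rfl

theorem nestedSum_congr {n : ℕ} {w w' : Fin n → ℕ → ℝ≥0∞} (h : ∀ i, ∀ a > 0, w i a = w' i a)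
    (m : ℕ) : nestedSum w m = nestedSum w' m :=
  tsum_congr fun ℓ ↦ prod_congr rfl fun i _ ↦ h i _ (m.zero_le.trans_lt (ℓ.2.2 i))

theorem nestedSum_eq_foldr_entryOp (x : ℝ≥0) {n : ℕ} (k : Fin n → ℕ) :
    nestedSum (fun i a ↦ (a - x : ℝ≥0∞)⁻¹ * (a : ℝ≥0∞)⁻¹ ^ (k i - 1)) =
      (List.ofFn k).foldr (entryOp x) 1 := by
  induction n with
  | zero => exact funext fun m ↦ nestedSum_zero _ m
  | succ n ih =>
    funext m
    rw [nestedSum_succ, List.ofFn_succ, List.foldr_cons, ← ih fun i ↦ k i.succ]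
    exact tsum_congr fun a ↦ by rw [iterate_divIndex, mul_assoc]; rfl

/-- Multiple zeta values as elements of `ℝ≥0∞`, where a divergent one is `⊤` (while the real `mzv`
is then `0`). -/
noncomputable def emzv {n : ℕ} (k : Fin n → ℕ) : ℝ≥0∞ :=
  nestedSum (fun i a ↦ ((a : ℝ≥0∞) ^ k i)⁻¹) 0

theorem mzv_eq_toReal_emzv {n : ℕ} (k : Fin n → ℕ) : mzv k = (emzv k).toReal := by
  rw [emzv, nestedSum, ENNReal.tsum_toReal_eq]
  · simp only [mzv, ENNReal.toReal_prod, ENNReal.toReal_inv, ENNReal.toReal_pow,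
      ENNReal.toReal_natCast]
  · exact fun ℓ ↦ ENNReal.prod_ne_top fun i _ ↦ ENNReal.inv_ne_top.2 <|
      pow_ne_zero _ (Nat.cast_ne_zero.2 (ℓ.2.2 i).ne')

theorem tsum_prod_eq_prod_tsum {n : ℕ} {ι : Type*} (f : Fin n → ι → ℝ≥0∞) :
    ∑' e : Fin n → ι, ∏ i, f i (e i) = ∏ i, ∑' j, f i j := by
  induction n with
  | zero => simp
  | succ n ih =>
    rw [← (Fin.consEquiv fun _ ↦ ι).tsum_eq, ENNReal.tsum_prod', Fin.prod_univ_succ, ← ih,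
      ← ENNReal.tsum_mul_right]
    refine tsum_congr fun j ↦ ?_
    rw [← ENNReal.tsum_mul_left]
    exact tsum_congr fun e ↦ Fin.prod_univ_succ _

theorem tsum_sum_antidiagonalTuple (n : ℕ) (f : (Fin n → ℕ) → ℝ≥0∞) :
    ∑' N, ∑ e ∈ Nat.antidiagonalTuple n N, f e = ∑' e, f e := by
  rw [← (Nat.sigmaAntidiagonalTupleEquivTuple n).tsum_eq, ENNReal.tsum_sigma']
  exact tsum_congr fun N ↦ (Finset.tsum_subtype _ f).symm

theorem tsum_pow_mul_inv_pow_add (x : ℝ≥0) {k a : ℕ} (hk : 0 < k) (ha : 0 < a) :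
    ∑' j, (x : ℝ≥0∞) ^ j * ((a : ℝ≥0∞) ^ (k + j))⁻¹ =
      (a - x : ℝ≥0∞)⁻¹ * (a : ℝ≥0∞)⁻¹ ^ (k - 1) := by
  have ha₀ : (a : ℝ≥0∞) ≠ 0 := Nat.cast_ne_zero.2 ha.ne'
  have ha_top : (a : ℝ≥0∞) ≠ ⊤ := ENNReal.natCast_ne_top a
  have term (j : ℕ) : (x : ℝ≥0∞) ^ j * ((a : ℝ≥0∞) ^ (k + j))⁻¹ =
      (a : ℝ≥0∞)⁻¹ ^ (k - 1) * ((a : ℝ≥0∞)⁻¹ * (x / a : ℝ≥0∞) ^ j) := by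
    obtain ⟨k, rfl⟩ := Nat.exists_eq_add_of_lt hk
    rw [ENNReal.inv_pow, div_eq_mul_inv, mul_pow, zero_add, Nat.add_sub_cancel]
    ring
  have geom : (a : ℝ≥0∞)⁻¹ * (1 - x / a : ℝ≥0∞)⁻¹ = (a - x : ℝ≥0∞)⁻¹ := by
    rw [← ENNReal.mul_inv (.inl ha₀) (.inl ha_top), ENNReal.mul_sub fun _ _ ↦ ha_top, mul_one,
      ENNReal.mul_div_cancel ha₀ ha_top]
  rw [tsum_congr term, ENNReal.tsum_mul_left, ENNReal.tsum_mul_left, ENNReal.tsum_geometric, geom,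
    mul_comm]

theorem tsum_pow_mul_sum_emzv (x : ℝ≥0) {n : ℕ} {k : Fin n → ℕ} (hk : ∀ i, 0 < k i) :
    ∑' N, (x : ℝ≥0∞) ^ N * ∑ e ∈ Nat.antidiagonalTuple n N, emzv (k + e) =
      (List.ofFn k).foldr (entryOp x) 1 0 :=
  calc ∑' N, (x : ℝ≥0∞) ^ N * ∑ e ∈ Nat.antidiagonalTuple n N, emzv (k + e)
    _ = ∑' N, ∑ e ∈ Nat.antidiagonalTuple n N, (x : ℝ≥0∞) ^ (∑ i, e i) * emzv (k + e) := by
      refine tsum_congr fun N ↦ ?_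
      rw [mul_sum]
      exact sum_congr rfl fun e he ↦ by rw [Nat.mem_antidiagonalTuple.1 he]
    _ = ∑' e : Fin n → ℕ, (x : ℝ≥0∞) ^ (∑ i, e i) * emzv (k + e) :=
      tsum_sum_antidiagonalTuple n _
    _ = nestedSum (fun i a ↦ ∑' j, (x : ℝ≥0∞) ^ j * ((a : ℝ≥0∞) ^ (k i + j))⁻¹) 0 := by
      simp only [emzv, nestedSum, ← ENNReal.tsum_mul_left, ← tsum_prod_eq_prod_tsum,
        ← prod_pow_eq_pow_sum, ← prod_mul_distrib, Pi.add_apply]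
      exact ENNReal.tsum_comm
    _ = (List.ofFn k).foldr (entryOp x) 1 0 := by
      rw [nestedSum_congr fun i a ha ↦ tsum_pow_mul_inv_pow_add x (hk i) ha,
        nestedSum_eq_foldr_entryOp]

/-! ### Comparison of coefficients -/

theorem tsum_pow_mul_eq_add (x : ℝ≥0∞) (A : ℕ → ℝ≥0∞) :
    ∑' n, x ^ n * A n = A 0 + x * ∑' n, x ^ n * A (n + 1) := by
  rw [tsum_eq_zero_add' ENNReal.summable, pow_zero, one_mul, ← ENNReal.tsum_mul_left]
  simp only [pow_succ', mul_assoc]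

theorem tsum_pow_mul_succ_ne_top {r : ℝ≥0∞} (hr : r ≠ 0) {A : ℕ → ℝ≥0∞}
    (hA : ∑' n, r ^ n * A n ≠ ⊤) : ∑' n, r ^ n * A (n + 1) ≠ ⊤ := fun h ↦ by
  rw [tsum_pow_mul_eq_add, h, ENNReal.mul_top hr, add_top] at hA
  exact hA rfl

theorem tendsto_tsum_pow_mul {r : ℝ≥0∞} (hr : r ≠ 0) {A : ℕ → ℝ≥0∞}
    (hA : ∑' n, r ^ n * A n ≠ ⊤) :
    Tendsto (fun x : ℝ≥0∞ ↦ ∑' n, x ^ n * A n) (𝓝[>] 0) (𝓝 (A 0)) := by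
  have upper : Tendsto (fun x : ℝ≥0∞ ↦ A 0 + x * ∑' n, r ^ n * A (n + 1)) (𝓝[>] 0)
      (𝓝 (A 0)) := by
    have lim := ENNReal.Tendsto.mul_const (tendsto_id (x := 𝓝 (0 : ℝ≥0∞)))
      (.inr (tsum_pow_mul_succ_ne_top hr hA))
    simpa using (lim.const_add (A 0)).mono_left nhdsWithin_le_nhds
  refine tendsto_of_tendsto_of_tendsto_of_le_of_le' tendsto_const_nhds upper
    (.of_forall fun x ↦ ?_) ?_
  · rw [tsum_pow_mul_eq_add]
    exact le_self_add
  · filter_upwards [Ioo_mem_nhdsGT (pos_iff_ne_zero.2 hr)] with x hx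
    rw [tsum_pow_mul_eq_add]
    gcongr
    exact hx.2.le

theorem eq_of_tsum_pow_mul_eventuallyEq {r : ℝ≥0∞} (hr : r ≠ 0) {A B : ℕ → ℝ≥0∞}
    (hA : ∑' n, r ^ n * A n ≠ ⊤) (hB : ∑' n, r ^ n * B n ≠ ⊤)
    (h : (fun x : ℝ≥0∞ ↦ ∑' n, x ^ n * A n) =ᶠ[𝓝[>] 0] fun x ↦ ∑' n, x ^ n * B n) (n : ℕ) :
    A n = B n := by
  have zero : A 0 = B 0 :=
    tendsto_nhds_unique_of_eventuallyEq (tendsto_tsum_pow_mul hr hA)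
      (tendsto_tsum_pow_mul hr hB) h
  induction n generalizing A B with
  | zero => exact zero
  | succ _ ih =>
    have hA' := tsum_pow_mul_succ_ne_top hr hA
    have hB' := tsum_pow_mul_succ_ne_top hr hB
    have shifted : (fun x : ℝ≥0∞ ↦ ∑' n, x ^ n * A (n + 1)) =ᶠ[𝓝[>] 0]
        fun x ↦ ∑' n, x ^ n * B (n + 1) := by
      have hB₀ : B 0 ≠ ⊤ := by simpa using ENNReal.ne_top_of_tsum_ne_top hB 0
      filter_upwards [h, Ioo_mem_nhdsGT ENNReal.zero_lt_top] with x hx hx'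
      rw [tsum_pow_mul_eq_add, tsum_pow_mul_eq_add x B, zero, ENNReal.add_right_inj hB₀,
        ENNReal.mul_right_inj hx'.1.ne' hx'.2.ne] at hx
      exact hx
    exact ih hA' hB' shifted <| tendsto_nhds_unique_of_eventuallyEq
      (tendsto_tsum_pow_mul hr hA') (tendsto_tsum_pow_mul hr hB') shifted

theorem tsum_pow_mul_sum_emzv_of_ofFn_eq_blockIndex (x : ℝ≥0) {l : List (ℕ × ℕ)} {n : ℕ}
    {k : Fin n → ℕ} (hk : List.ofFn k = blockIndex l) :
    ∑' N, (x : ℝ≥0∞) ^ N * ∑ e ∈ Nat.antidiagonalTuple n N, emzv (k + e) =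
      l.foldr (blockOp x) 1 0 := by
  have pos (i : Fin n) : 0 < k i :=
    pos_of_mem_blockIndex <| hk ▸ List.mem_ofFn.2 ⟨i, rfl⟩
  rw [tsum_pow_mul_sum_emzv x pos, hk, foldr_entryOp_blockIndex]

theorem tsum_pow_mul_sum_emzv_ne_top {x : ℝ≥0} (hx : x < 1) {l : List (ℕ × ℕ)} {n : ℕ}
    {k : Fin n → ℕ} (hk : List.ofFn k = blockIndex l) :
    ∑' N, (x : ℝ≥0∞) ^ N * ∑ e ∈ Nat.antidiagonalTuple n N, emzv (k + e) ≠ ⊤ := by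
  rw [tsum_pow_mul_sum_emzv_of_ofFn_eq_blockIndex x hk]
  exact foldr_blockOp_ne_top hx l 0

theorem emzv_add_ne_top {l : List (ℕ × ℕ)} {n : ℕ} {k : Fin n → ℕ}
    (hk : List.ofFn k = blockIndex l) (e : Fin n → ℕ) : emzv (k + e) ≠ ⊤ := by
  have coeff := ENNReal.ne_top_of_tsum_ne_top
    (tsum_pow_mul_sum_emzv_ne_top (x := 1 / 2) (by norm_num) hk) (∑ i, e i)
  have sum_ne_top : ∑ e' ∈ Nat.antidiagonalTuple n (∑ i, e i), emzv (k + e') ≠ ⊤ := fun h ↦ by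
    rw [h, ENNReal.mul_top (pow_ne_zero _ (by simp))] at coeff
    exact coeff rfl
  exact ENNReal.sum_ne_top.1 sum_ne_top e (Nat.mem_antidiagonalTuple.2 rfl)

theorem sum_mzv_add_eq_toReal {l : List (ℕ × ℕ)} {n : ℕ} {k : Fin n → ℕ}
    (hk : List.ofFn k = blockIndex l) (s : Finset (Fin n → ℕ)) :
    ∑ e ∈ s, mzv (k + e) = (∑ e ∈ s, emzv (k + e)).toReal := by
  rw [ENNReal.toReal_sum fun e _ ↦ emzv_add_ne_top hk e]
  exact sum_congr rfl fun e _ ↦ mzv_eq_toReal_emzv _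

theorem ohno_relation {l : List (ℕ × ℕ)} {n n' : ℕ} {k : Fin n → ℕ} {k' : Fin n' → ℕ}
    (hk : List.ofFn k = blockIndex l) (hk' : List.ofFn k' = blockIndex (dual l)) (N : ℕ) :
    ∑ e ∈ Nat.antidiagonalTuple n N, mzv (k + e) =
      ∑ e ∈ Nat.antidiagonalTuple n' N, mzv (k' + e) := by
  have half_lt_one : (1 / 2 : ℝ≥0) < 1 := by norm_num
  rw [sum_mzv_add_eq_toReal hk, sum_mzv_add_eq_toReal hk']
  congr 1
  refine eq_of_tsum_pow_mul_eventuallyEq (r := (1 / 2 : ℝ≥0)) (by simp)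
    (A := fun N ↦ ∑ e ∈ Nat.antidiagonalTuple n N, emzv (k + e))
    (B := fun N ↦ ∑ e ∈ Nat.antidiagonalTuple n' N, emzv (k' + e)) ?_ ?_ ?_ N
  · exact tsum_pow_mul_sum_emzv_ne_top half_lt_one hk
  · exact tsum_pow_mul_sum_emzv_ne_top half_lt_one hk'
  · filter_upwards [Ioo_mem_nhdsGT zero_lt_one] with x hx
    lift x to ℝ≥0 using hx.2.ne_top
    rw [tsum_pow_mul_sum_emzv_of_ofFn_eq_blockIndex _ hk,
      tsum_pow_mul_sum_emzv_of_ofFn_eq_blockIndex _ hk',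
      foldr_blockOp_dual (ENNReal.coe_lt_one_iff.1 hx.2)]

/-! ### Compositions and tuples -/

/-- The compositions of `m = n + b` into `n` parts are the tuples with sum `b`, shifted by `1`. -/
def antidiagonalTupleEquivComp {n b m : ℕ} (h : n + b = m) :
    {u // u ∈ Nat.antidiagonalTuple n b} ≃ Comp n m where
  toFun u := ⟨1 + u.1, fun i ↦ by simp, by
    simpa [sum_add_distrib, Nat.mem_antidiagonalTuple.1 u.2] using h⟩
  invFun v := ⟨v.1 - 1, Nat.mem_antidiagonalTuple.2 <| by
    have split : ∑ i, v.1 i = ∑ i, (v.1 i - 1 + 1) :=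
      sum_congr rfl fun i _ ↦ (Nat.sub_add_cancel (v.2.1 i)).symm
    have total := v.2.2
    rw [split, sum_add_distrib, Fin.sum_const, smul_eq_mul, mul_one] at total
    simp only [Pi.sub_apply, Pi.one_apply]
    omega⟩
  left_inv u := Subtype.ext <| funext fun i ↦ Nat.add_sub_cancel_left 1 _
  right_inv v := Subtype.ext <| funext fun i ↦ Nat.add_sub_cancel' (v.2.1 i)

theorem tsum_comp_eq_sum_antidiagonalTuple {M : Type*} [AddCommMonoid M] [TopologicalSpace M]
    {n b m : ℕ} (h : n + b = m) (f : (Fin n → ℕ) → M) :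
    ∑' α : Comp n m, f α.1 = ∑ u ∈ Nat.antidiagonalTuple n b, f (1 + u) := by
  rw [← (antidiagonalTupleEquivComp h).tsum_eq, ← Finset.tsum_subtype]
  rfl

theorem sum_antidiagonalTuple_add {M : Type*} [AddCommMonoid M] (m n N : ℕ)
    (f : (Fin (m + n) → ℕ) → M) :
    ∑ e ∈ Nat.antidiagonalTuple (m + n) N, f e =
      ∑ b ∈ antidiagonal N, ∑ u ∈ Nat.antidiagonalTuple m b.1,
        ∑ v ∈ Nat.antidiagonalTuple n b.2, f (Fin.append u v) := by
  simp only [← sum_product', sum_sigma']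
  symm
  refine sum_nbij' (fun s ↦ Fin.append s.2.1 s.2.2)
    (fun e ↦ ⟨(∑ i, e (Fin.castAdd n i), ∑ j, e (Fin.natAdd m j)),
      (fun i ↦ e (Fin.castAdd n i), fun j ↦ e (Fin.natAdd m j))⟩) ?_ ?_ ?_ ?_ ?_
  · rintro ⟨⟨b₁, b₂⟩, u, v⟩ h
    simp only [mem_sigma, HasAntidiagonal.mem_antidiagonal, mem_product,
      Nat.mem_antidiagonalTuple] at h
    simp [Nat.mem_antidiagonalTuple, Fin.sum_univ_add, h]
  · intro e he
    simpa [Nat.mem_antidiagonalTuple, Fin.sum_univ_add] using he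
  · rintro ⟨⟨b₁, b₂⟩, u, v⟩ h
    simp only [mem_sigma, HasAntidiagonal.mem_antidiagonal, mem_product,
      Nat.mem_antidiagonalTuple] at h
    simp [h]
  · intro e _
    exact Fin.append_castAdd_natAdd
  · exact fun _ _ ↦ rfl

theorem sum_antidiagonalTuple_two {M : Type*} [AddCommMonoid M] (N : ℕ)
    (f : (Fin 2 → ℕ) → M) :
    ∑ e ∈ Nat.antidiagonalTuple 2 N, f e = ∑ b ∈ antidiagonal N, f ![b.1, b.2] := by
  rw [Nat.antidiagonalTuple_two, sum_map]
  rfl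

theorem append_add_append {m n : ℕ} (p u : Fin m → ℕ) (q v : Fin n → ℕ) :
    Fin.append (p + u) (q + v) = Fin.append p q + Fin.append u v := by
  funext i
  refine Fin.addCases (fun i ↦ ?_) (fun i ↦ ?_) i <;> simp

theorem incLast_add {n : ℕ} (u v : Fin n → ℕ) : incLast (u + v) = incLast u + v := by
  funext i
  simp only [incLast, Pi.add_apply]
  split_ifs <;> omega

theorem ofFn_incLast_one (a : ℕ) :
    List.ofFn (incLast (1 : Fin (a + 1) → ℕ)) = List.replicate a 1 ++ [2] := by
  have init_eq_one (i : Fin a) : incLast (1 : Fin (a + 1) → ℕ) i.castSucc = 1 := by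
    simp [incLast, i.2.ne]
  rw [List.ofFn_succ', List.concat_eq_append, funext init_eq_one, List.ofFn_const]
  simp [incLast]

theorem tsum_comp_append_incLast {M : Type*} [AddCommMonoid M] [TopologicalSpace M]
    {m n b c m' n' : ℕ} (hm : m + b = m') (hn : n + c = n') (f : (Fin (m + n) → ℕ) → M) :
    ∑' (α : Comp m m') (β : Comp n n'), f (Fin.append (incLast α.1) (incLast β.1)) =
      ∑ u ∈ Nat.antidiagonalTuple m b, ∑ v ∈ Nat.antidiagonalTuple n c,
        f (Fin.append (incLast 1) (incLast 1) + Fin.append u v) := by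
  have inner (α : Fin m → ℕ) :=
    tsum_comp_eq_sum_antidiagonalTuple hn fun β ↦ f (Fin.append (incLast α) (incLast β))
  simp only [inner, ← append_add_append, ← incLast_add]
  exact tsum_comp_eq_sum_antidiagonalTuple hm fun α ↦
    ∑ v ∈ Nat.antidiagonalTuple n c, f (Fin.append (incLast α) (incLast (1 + v)))

end Ohno

theorem ohno_special_case (a₁ a₂ ℓ : ℕ) :
    (∑ b ∈ antidiagonal ℓ,
      ∑' (α : Comp (a₁ + 1) (a₁ + b.1 + 1)) (β : Comp (a₂ + 1) (a₂ + b.2 + 1)),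
        mzv (Fin.append (incLast α.1) (incLast β.1))) =
    ∑ b ∈ antidiagonal ℓ, mzv ![a₂ + b.2 + 2, a₁ + b.1 + 2] := by
  let k := Fin.append (incLast (1 : Fin (a₁ + 1) → ℕ)) (incLast (1 : Fin (a₂ + 1) → ℕ))
  let k' := ![a₂ + 2, a₁ + 2]
  have hk : List.ofFn k = Ohno.blockIndex [(a₁, 0), (a₂, 0)] := by
    rw [List.ofFn_fin_append, Ohno.ofFn_incLast_one, Ohno.ofFn_incLast_one]
    simp [Ohno.blockIndex]
  have hk' : List.ofFn k' = Ohno.blockIndex (Ohno.dual [(a₁, 0), (a₂, 0)]) := by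
    simp [k', Ohno.blockIndex, Ohno.dual]
  calc _ = ∑ b ∈ antidiagonal ℓ, ∑ u ∈ Nat.antidiagonalTuple (a₁ + 1) b.1,
        ∑ v ∈ Nat.antidiagonalTuple (a₂ + 1) b.2, mzv (k + Fin.append u v) :=
      sum_congr rfl fun b _ ↦ Ohno.tsum_comp_append_incLast
        (add_right_comm a₁ 1 b.1) (add_right_comm a₂ 1 b.2) mzv
    _ = ∑ e ∈ Nat.antidiagonalTuple (a₁ + 1 + (a₂ + 1)) ℓ, mzv (k + e) :=
      (Ohno.sum_antidiagonalTuple_add _ _ ℓ fun e ↦ mzv (k + e)).symm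
    _ = ∑ e ∈ Nat.antidiagonalTuple 2 ℓ, mzv (k' + e) := Ohno.ohno_relation hk hk' ℓ
    _ = _ := by
      rw [Ohno.sum_antidiagonalTuple_two, ← Nat.sum_antidiagonal_swap]
      simp [k', add_right_comm]
end

section
/- First evaluation of the two-variable log integral: for nonnegative integers k, ℓ and real parameters μ_1, μ_2, ξ_1, ξ_2, the integral I_{k,ℓ}(μ_1,μ_2,ξ_1,ξ_2) := (1/(k!ℓ!)) ∫_{0<s_1<s_2<1, 0<t_1<t_2<1} (μ_1 log((1-s_1)/(1-s_2)) + μ_2 log((1-t_1)/(1-t_2)))^k (ξ_1 log(s_2/s_1) + ξ_2 log(t_2/t_1))^ℓ ds_1 ds_2 dt_1 dt_2 / ((1-s_1) s_2 (1-t_1) t_2) equals ∑_{a_1+a_2=k, b_1+b_2=ℓ} μ_1^{a_1} μ_2^{a_2} ξ_1^{b_1} ξ_2^{b_2} ζ(a_1+b_1+2) ζ(a_2+b_2+2). -/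
open MeasureTheory Real Finset

/-!
The logarithms `u = log ((1 - s) / (1 - t))`, `v = log (t / s)` are global coordinates on the
triangle `0 < s < t < 1`. They map it onto the quadrant `u, v > 0` and transport the measure
`ds dt / ((1 - s) t)` to `du dv / (exp (u + v) - 1)`. Expanding the latter density as the geometric
series `∑ n, exp (-(n + 1) (u + v))` turns the integral of `u ^ a / a! * v ^ b / b!` into a sum of
products of two Gamma integrals, namely `ζ(a + b + 2)`. The two-variable integral follows by
applying the binomial theorem, in its divided-power form, to both powers and using Fubini.
-/

open scoped Nat

lemma add_pow_div_factorial {K : Type*} [Semifield K] [CharZero K] (x y : K) (n : ℕ) :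
    (x + y) ^ n / n ! = ∑ a ∈ antidiagonal n, x ^ a.1 / a.1 ! * (y ^ a.2 / a.2 !) := by
  rw [(Commute.all x y).add_pow', sum_div]
  refine sum_congr rfl fun a ha => ?_
  have : (n ! : K) ≠ 0 := Nat.cast_ne_zero.2 n.factorial_ne_zero
  rw [← mem_antidiagonal.1 ha] at this ⊢
  rw [nsmul_eq_mul, Nat.cast_add_choose]
  field_simp

lemma mzv_singleton (m : ℕ) : mzv ![m] = ∑' n : ℕ, (((n : ℝ) + 1) ^ m)⁻¹ := by
  let e : {ℓ : Fin 1 → ℕ // StrictMono ℓ ∧ ∀ i, 0 < ℓ i} ≃ ℕ+ :=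
    (Equiv.funUnique (Fin 1) ℕ).subtypeEquiv fun ℓ => by
      simp [Subsingleton.strictMono, Fin.forall_fin_one]
  calc mzv ![m] = ∑' n : ℕ+, ((n : ℝ) ^ m)⁻¹ := by
        rw [← e.tsum_eq]
        exact tsum_congr fun ℓ => by rw [Fin.prod_univ_one]; rfl
    _ = ∑' n : ℕ, (((n : ℝ) + 1) ^ m)⁻¹ := by
        rw [tsum_pnat_eq_tsum_succ (f := fun n : ℕ => ((n : ℝ) ^ m)⁻¹)]
        exact tsum_congr fun n => by push_cast; rfl

lemma summable_inv_succ_pow {m : ℕ} (hm : 1 < m) :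
    Summable fun n : ℕ => (((n : ℝ) + 1) ^ m)⁻¹ := by
  exact_mod_cast (summable_nat_add_iff 1).2 (Real.summable_nat_pow_inv.2 hm)

lemma mzv_singleton_pos {m : ℕ} (hm : 1 < m) : 0 < mzv ![m] := by
  rw [mzv_singleton]
  exact (summable_inv_succ_pow hm).tsum_pos (fun n => by positivity) 0 (by positivity)

lemma hasSum_exp_neg_succ_mul {w : ℝ} (hw : 0 < w) :
    HasSum (fun n : ℕ => exp (-(((n : ℝ) + 1) * w))) (exp w - 1)⁻¹ := by
  have hgeom := (hasSum_geometric_of_lt_one (exp_pos (-w)).le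
    (exp_lt_one_iff.2 (neg_neg_of_pos hw))).mul_left (exp (-w))
  convert! hgeom using 1
  · ext n
    rw [← exp_nat_mul, ← exp_add]
    ring_nf
  · rw [exp_neg, ← mul_inv, mul_sub, mul_one, mul_inv_cancel₀ (exp_ne_zero w)]

lemma integral_pow_mul_exp_neg_mul_Ioi (a : ℕ) {r : ℝ} (hr : 0 < r) :
    ∫ u in Set.Ioi (0 : ℝ), u ^ a * exp (-(r * u)) = a ! * (r ^ (a + 1))⁻¹ := by
  have hGamma := integral_rpow_mul_exp_neg_mul_Ioi (a := (a : ℝ) + 1) (by positivity) hr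
  simp only [add_sub_cancel_right, rpow_natCast, Gamma_nat_eq_factorial] at hGamma
  rw [hGamma, one_div, inv_rpow hr.le, ← Nat.cast_add_one, rpow_natCast, mul_comm]

/-- The open quadrant `u, v > 0`, the range of the logarithmic coordinates of the triangle. -/
abbrev openQuadrant : Set (ℝ × ℝ) := Set.Ioi 0 ×ˢ Set.Ioi 0

lemma measurableSet_openQuadrant : MeasurableSet openQuadrant :=
  measurableSet_Ioi.prod measurableSet_Ioi

lemma integral_pow_mul_pow_mul_exp_neg_mul_add (a b : ℕ) {r : ℝ} (hr : 0 < r) :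
    ∫ p in openQuadrant, exp (-(r * (p.1 + p.2))) * (p.1 ^ a * p.2 ^ b) =
      a ! * b ! * (r ^ (a + b + 2))⁻¹ := by
  calc _ = ∫ p in openQuadrant,
          (p.1 ^ a * exp (-(r * p.1))) * (p.2 ^ b * exp (-(r * p.2))) := by
        congr with p
        rw [mul_add, neg_add, exp_add]
        ring
    _ = (a ! * (r ^ (a + 1))⁻¹) * (b ! * (r ^ (b + 1))⁻¹) := by
        rw [Measure.volume_eq_prod, setIntegral_prod_mul (fun u : ℝ => u ^ a * exp (-(r * u)))
          (fun v : ℝ => v ^ b * exp (-(r * v))), integral_pow_mul_exp_neg_mul_Ioi a hr,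
          integral_pow_mul_exp_neg_mul_Ioi b hr]
    _ = a ! * b ! * (r ^ (a + b + 2))⁻¹ := by
        field_simp
        ring

lemma integral_pow_mul_pow_div_exp_add_sub_one (a b : ℕ) :
    ∫ p in openQuadrant, (exp (p.1 + p.2) - 1)⁻¹ * (p.1 ^ a * p.2 ^ b) =
      a ! * b ! * mzv ![a + b + 2] := by
  let F (n : ℕ) (p : ℝ × ℝ) : ℝ := exp (-(((n : ℝ) + 1) * (p.1 + p.2))) * (p.1 ^ a * p.2 ^ b)
  have hF_integral (n : ℕ) : ∫ p in openQuadrant, F n p =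
      a ! * b ! * (((n : ℝ) + 1) ^ (a + b + 2))⁻¹ :=
    integral_pow_mul_pow_mul_exp_neg_mul_add a b n.cast_add_one_pos
  have hF_integral_norm (n : ℕ) : ∫ p in openQuadrant, ‖F n p‖ =
      a ! * b ! * (((n : ℝ) + 1) ^ (a + b + 2))⁻¹ := by
    rw [← hF_integral n]
    refine setIntegral_congr_fun measurableSet_openQuadrant fun p ⟨hu, hv⟩ => norm_of_nonneg ?_
    have := Set.mem_Ioi.1 hu
    have := Set.mem_Ioi.1 hv
    positivity
  have hF_integrable (n : ℕ) : IntegrableOn (F n) openQuadrant :=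
    .of_integral_ne_zero (by rw [hF_integral n]; positivity)
  have hF_hasSum {p : ℝ × ℝ} (hp : p ∈ openQuadrant) :
      HasSum (F · p) ((exp (p.1 + p.2) - 1)⁻¹ * (p.1 ^ a * p.2 ^ b)) :=
    (hasSum_exp_neg_succ_mul (add_pos hp.1 hp.2)).mul_right _
  have hsummable : Summable fun n => ∫ p in openQuadrant, ‖F n p‖ := by
    simpa only [hF_integral_norm] using (summable_inv_succ_pow (by lia)).mul_left _
  calc _ = ∫ p in openQuadrant, ∑' n, F n p :=
        setIntegral_congr_fun measurableSet_openQuadrant fun p hp => (hF_hasSum hp).tsum_eq.symm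
    _ = ∑' n, ∫ p in openQuadrant, F n p :=
        (hasSum_integral_of_summable_integral_norm hF_integrable hsummable).tsum_eq.symm
    _ = a ! * b ! * mzv ![a + b + 2] := by
        simp only [hF_integral, tsum_mul_left, mzv_singleton]

/-- The open triangle `0 < s < t < 1` over which each pair of variables is integrated. -/
def openTriangle : Set (ℝ × ℝ) := {x | 0 < x.1 ∧ x.1 < x.2 ∧ x.2 < 1}

lemma isOpen_openTriangle : IsOpen openTriangle :=
  (isOpen_lt continuous_const continuous_fst).inter <|
    (isOpen_lt continuous_fst continuous_snd).inter (isOpen_lt continuous_snd continuous_const)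

/-- The logarithmic coordinates `(log ((1 - s) / (1 - t)), log (t / s))` of a point `(s, t)` of the
open triangle. -/
noncomputable def logCoords (x : ℝ × ℝ) : ℝ × ℝ :=
  (log ((1 - x.1) / (1 - x.2)), log (x.2 / x.1))

/-- The inverse of `logCoords`, as a map from the quadrant `u, v > 0` to the open triangle: the
solution of the equations `1 - s = exp u * (1 - t)` and `t = exp v * s`. -/
noncomputable def logCoordsInv (p : ℝ × ℝ) : ℝ × ℝ :=
  ((exp p.1 - 1) / (exp (p.1 + p.2) - 1), exp p.2 * (exp p.1 - 1) / (exp (p.1 + p.2) - 1))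

section logCoords

variable {x p : ℝ × ℝ}

lemma exp_logCoords_fst (hx : x ∈ openTriangle) :
    exp (logCoords x).1 = (1 - x.1) / (1 - x.2) := by
  obtain ⟨-, hst, ht⟩ := hx
  exact exp_log (div_pos (by linarith) (by linarith))

lemma exp_logCoords_snd (hx : x ∈ openTriangle) : exp (logCoords x).2 = x.2 / x.1 := by
  obtain ⟨hs, hst, -⟩ := hx
  exact exp_log (div_pos (by linarith) hs)

lemma exp_logCoords_add_sub_one (hx : x ∈ openTriangle) :
    exp ((logCoords x).1 + (logCoords x).2) - 1 = (x.2 - x.1) / ((1 - x.2) * x.1) := by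
  rw [exp_add, exp_logCoords_fst hx, exp_logCoords_snd hx]
  obtain ⟨hs, -, ht⟩ := hx
  have : 1 - x.2 ≠ 0 := by linarith
  field_simp
  ring

lemma mapsTo_logCoords : Set.MapsTo logCoords openTriangle openQuadrant := by
  rintro x ⟨hs, hst, ht⟩
  exact ⟨log_pos ((one_lt_div (by linarith)).2 (by linarith)), log_pos ((one_lt_div hs).2 hst)⟩

lemma mapsTo_logCoordsInv : Set.MapsTo logCoordsInv openQuadrant openTriangle := by
  rintro p ⟨hu, hv⟩
  have hU : 1 < exp p.1 := one_lt_exp_iff.2 hu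
  have hV : 1 < exp p.2 := one_lt_exp_iff.2 hv
  have hUV : 0 < exp (p.1 + p.2) - 1 := sub_pos.2 (one_lt_exp_iff.2 (add_pos hu hv))
  refine ⟨div_pos (sub_pos.2 hU) hUV, div_lt_div_of_pos_right ?_ hUV, (div_lt_one hUV).2 ?_⟩
  · exact lt_mul_of_one_lt_left (sub_pos.2 hU) hV
  · rw [exp_add]
    linarith

lemma logCoordsInv_logCoords (hx : x ∈ openTriangle) : logCoordsInv (logCoords x) = x := by
  have hU := exp_logCoords_fst hx
  have hV := exp_logCoords_snd hx
  have hUV := exp_logCoords_add_sub_one hx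
  obtain ⟨hs, hst, ht⟩ := hx
  have : 1 - x.2 ≠ 0 := by linarith
  have : x.2 - x.1 ≠ 0 := by linarith
  have hfst : (logCoordsInv (logCoords x)).1 = x.1 := by
    rw [logCoordsInv, hUV, hU]
    field_simp
    ring
  refine Prod.ext hfst ?_
  calc (logCoordsInv (logCoords x)).2 = exp (logCoords x).2 * (logCoordsInv (logCoords x)).1 :=
        mul_div_assoc _ _ _
    _ = x.2 := by rw [hfst, hV, div_mul_cancel₀ _ hs.ne']

lemma logCoords_logCoordsInv (hp : p ∈ openQuadrant) :
    logCoords (logCoordsInv p) = p := by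
  obtain ⟨hs, -, ht⟩ := mapsTo_logCoordsInv hp
  have hUV : exp (p.1 + p.2) - 1 ≠ 0 := (sub_pos.2 (one_lt_exp_iff.2 (add_pos hp.1 hp.2))).ne'
  have hfst : 1 - (logCoordsInv p).1 = exp p.1 * (1 - (logCoordsInv p).2) := by
    simp only [logCoordsInv]
    field_simp
    rw [exp_add]
    ring
  have hsnd : (logCoordsInv p).2 = exp p.2 * (logCoordsInv p).1 := mul_div_assoc _ _ _
  refine Prod.ext ?_ ?_
  · rw [logCoords, hfst, mul_div_cancel_right₀ _ (sub_pos.2 ht).ne', log_exp]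
  · rw [logCoords, hsnd, mul_div_cancel_right₀ _ hs.ne', log_exp]

lemma bijOn_logCoords : Set.BijOn logCoords openTriangle openQuadrant :=
  Set.InvOn.bijOn ⟨fun _ => logCoordsInv_logCoords, fun _ => logCoords_logCoordsInv⟩
    mapsTo_logCoords mapsTo_logCoordsInv

/-- The Fréchet derivative of `logCoords` at a point of the open triangle, given by its Jacobian
matrix. -/
noncomputable def logCoordsDeriv (x : ℝ × ℝ) : ℝ × ℝ →L[ℝ] ℝ × ℝ :=
  (Matrix.toLin (.finTwoProd ℝ) (.finTwoProd ℝ)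
    !![-(1 - x.1)⁻¹, (1 - x.2)⁻¹; -x.1⁻¹, x.2⁻¹]).toContinuousLinearMap

lemma hasFDerivAt_logCoords (hx : x ∈ openTriangle) :
    HasFDerivAt logCoords (logCoordsDeriv x) x := by
  have hlog : logCoords =ᶠ[nhds x]
      fun y => (log (1 - y.1) - log (1 - y.2), log y.2 - log y.1) := by
    filter_upwards [isOpen_openTriangle.mem_nhds hx] with y ⟨hs, hst, ht⟩
    rw [logCoords, log_div (by linarith) (by linarith), log_div (by linarith) hs.ne']
  obtain ⟨hs, hst, ht⟩ := hx
  have hfst := hasFDerivAt_fst (𝕜 := ℝ) (p := x)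
  have hsnd := hasFDerivAt_snd (𝕜 := ℝ) (p := x)
  refine HasFDerivAt.congr_of_eventuallyEq ?_ hlog
  rw [logCoordsDeriv, Matrix.toLin_finTwoProd_toContinuousLinearMap]
  convert! (((hfst.const_sub 1).log (by linarith)).sub
    ((hsnd.const_sub 1).log (by linarith))).prodMk
    ((hsnd.log (by linarith)).sub (hfst.log hs.ne')) using 2 <;>
  ext <;> simp

lemma det_logCoordsDeriv (hx : x ∈ openTriangle) :
    (logCoordsDeriv x).det = (x.2 - x.1) / ((1 - x.2) * x.1 * ((1 - x.1) * x.2)) := by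
  obtain ⟨hs, hst, ht⟩ := hx
  have : 1 - x.1 ≠ 0 := by linarith
  have : 1 - x.2 ≠ 0 := by linarith
  have : x.2 ≠ 0 := by linarith
  simp only [logCoordsDeriv, LinearMap.det_toContinuousLinearMap, LinearMap.det_toLin,
    Matrix.det_fin_two_of]
  field_simp
  ring

lemma abs_det_logCoordsDeriv_mul_inv_exp_sub_one (hx : x ∈ openTriangle) :
    |(logCoordsDeriv x).det| * (exp ((logCoords x).1 + (logCoords x).2) - 1)⁻¹ =
      ((1 - x.1) * x.2)⁻¹ := by
  rw [det_logCoordsDeriv hx, exp_logCoords_add_sub_one hx]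
  obtain ⟨hs, hst, ht⟩ := hx
  have : 0 < 1 - x.1 := by linarith
  have : 0 < 1 - x.2 := by linarith
  have : 0 < x.2 - x.1 := by linarith
  have : 0 < x.2 := by linarith
  rw [abs_of_pos (by positivity)]
  field_simp

lemma setIntegral_openTriangle_smul_comp_logCoords {E : Type*} [NormedAddCommGroup E]
    [NormedSpace ℝ E] (f : ℝ × ℝ → E) :
    ∫ x in openTriangle, ((1 - x.1) * x.2)⁻¹ • f (logCoords x) =
      ∫ p in openQuadrant, (exp (p.1 + p.2) - 1)⁻¹ • f p := by
  have hmeas := isOpen_openTriangle.measurableSet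
  rw [← bijOn_logCoords.image_eq, integral_image_eq_integral_abs_det_fderiv_smul volume hmeas
    (fun x hx => (hasFDerivAt_logCoords hx).hasFDerivWithinAt) bijOn_logCoords.injOn]
  refine setIntegral_congr_fun hmeas fun x hx => ?_
  simp only [smul_smul, abs_det_logCoordsDeriv_mul_inv_exp_sub_one hx]

end logCoords

/-- The divided-power monomial `u ^ a / a! * v ^ b / b!` in the logarithmic coordinates `(u, v)`,
times the density `1 / ((1 - s) * t)`; its integral over the open triangle is `ζ(a + b + 2)`. -/
noncomputable def logKernel (a b : ℕ) (x : ℝ × ℝ) : ℝ :=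
  ((1 - x.1) * x.2)⁻¹ * ((logCoords x).1 ^ a / a ! * ((logCoords x).2 ^ b / b !))

lemma integral_logKernel (a b : ℕ) : ∫ x in openTriangle, logKernel a b x = mzv ![a + b + 2] := by
  calc _ = ∫ p in openQuadrant,
          (exp (p.1 + p.2) - 1)⁻¹ * (p.1 ^ a / a ! * (p.2 ^ b / b !)) :=
        setIntegral_openTriangle_smul_comp_logCoords fun p => p.1 ^ a / a ! * (p.2 ^ b / b !)
    _ = mzv ![a + b + 2] := by
        simp only [div_mul_div_comm]
        simp only [← mul_div_assoc, integral_div, integral_pow_mul_pow_div_exp_add_sub_one]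
        field_simp

lemma integrableOn_logKernel (a b : ℕ) : IntegrableOn (logKernel a b) openTriangle :=
  .of_integral_ne_zero (by rw [integral_logKernel]; exact (mzv_singleton_pos (by lia)).ne')

lemma integral_logKernel_mul_logKernel (a b c d : ℕ) :
    ∫ x in openTriangle ×ˢ openTriangle, logKernel a b x.1 * logKernel c d x.2 =
      mzv ![a + b + 2] * mzv ![c + d + 2] := by
  rw [Measure.volume_eq_prod, setIntegral_prod_mul, integral_logKernel, integral_logKernel]

lemma integrableOn_logKernel_mul_logKernel (a b c d : ℕ) :
    IntegrableOn (fun x : (ℝ × ℝ) × ℝ × ℝ => logKernel a b x.1 * logKernel c d x.2)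
      (openTriangle ×ˢ openTriangle) := by
  rw [IntegrableOn, Measure.volume_eq_prod, ← Measure.prod_restrict]
  exact (integrableOn_logKernel a b).mul_prod (integrableOn_logKernel c d)

lemma pow_mul_pow_mul_density_eq_sum_logKernel (k ℓ : ℕ) (μ₁ μ₂ ξ₁ ξ₂ : ℝ) (x y : ℝ × ℝ) :
    ((k ! : ℝ) * ℓ !)⁻¹ * ((μ₁ * (logCoords x).1 + μ₂ * (logCoords y).1) ^ k *
        (ξ₁ * (logCoords x).2 + ξ₂ * (logCoords y).2) ^ ℓ *
        ((1 - x.1) * x.2 * (1 - y.1) * y.2)⁻¹) =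
      ∑ a ∈ antidiagonal k, ∑ b ∈ antidiagonal ℓ, μ₁ ^ a.1 * μ₂ ^ a.2 * ξ₁ ^ b.1 * ξ₂ ^ b.2 *
        (logKernel a.1 b.1 x * logKernel a.2 b.2 y) := by
  calc _ = (μ₁ * (logCoords x).1 + μ₂ * (logCoords y).1) ^ k / k ! *
          ((ξ₁ * (logCoords x).2 + ξ₂ * (logCoords y).2) ^ ℓ / ℓ !) *
          (((1 - x.1) * x.2)⁻¹ * ((1 - y.1) * y.2)⁻¹) := by
        simp only [div_eq_mul_inv, mul_inv]
        ring
    _ = _ := by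
        rw [add_pow_div_factorial, add_pow_div_factorial, sum_mul_sum, sum_mul]
        refine sum_congr rfl fun a _ => ?_
        rw [sum_mul]
        refine sum_congr rfl fun b _ => ?_
        simp only [logKernel, mul_pow]
        ring

theorem first_evaluation_two_variable_integral (k ℓ : ℕ) (μ₁ μ₂ ξ₁ ξ₂ : ℝ) :
    ((k.factorial : ℝ) * ℓ.factorial)⁻¹ *
      ∫ x in {x : (ℝ × ℝ) × ℝ × ℝ |
          (0 < x.1.1 ∧ x.1.1 < x.1.2 ∧ x.1.2 < 1) ∧
          (0 < x.2.1 ∧ x.2.1 < x.2.2 ∧ x.2.2 < 1)},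
        (μ₁ * Real.log ((1 - x.1.1) / (1 - x.1.2)) +
          μ₂ * Real.log ((1 - x.2.1) / (1 - x.2.2))) ^ k *
        (ξ₁ * Real.log (x.1.2 / x.1.1) + ξ₂ * Real.log (x.2.2 / x.2.1)) ^ ℓ *
        ((1 - x.1.1) * x.1.2 * (1 - x.2.1) * x.2.2)⁻¹ =
    ∑ a ∈ antidiagonal k, ∑ b ∈ antidiagonal ℓ,
      μ₁ ^ a.1 * μ₂ ^ a.2 * ξ₁ ^ b.1 * ξ₂ ^ b.2 *
        (mzv ![a.1 + b.1 + 2] * mzv ![a.2 + b.2 + 2]) := by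
  have hint (a b : ℕ × ℕ) : IntegrableOn (fun x : (ℝ × ℝ) × ℝ × ℝ =>
      μ₁ ^ a.1 * μ₂ ^ a.2 * ξ₁ ^ b.1 * ξ₂ ^ b.2 *
        (logKernel a.1 b.1 x.1 * logKernel a.2 b.2 x.2)) (openTriangle ×ˢ openTriangle) :=
    (integrableOn_logKernel_mul_logKernel a.1 b.1 a.2 b.2).const_mul _
  rw [← integral_const_mul]
  calc _ = ∫ x in openTriangle ×ˢ openTriangle, ∑ a ∈ antidiagonal k, ∑ b ∈ antidiagonal ℓ,
          μ₁ ^ a.1 * μ₂ ^ a.2 * ξ₁ ^ b.1 * ξ₂ ^ b.2 *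
            (logKernel a.1 b.1 x.1 * logKernel a.2 b.2 x.2) := by
        simp only [← pow_mul_pow_mul_density_eq_sum_logKernel]
        rfl
    _ = ∑ a ∈ antidiagonal k, ∑ b ∈ antidiagonal ℓ,
          ∫ x in openTriangle ×ˢ openTriangle, μ₁ ^ a.1 * μ₂ ^ a.2 * ξ₁ ^ b.1 * ξ₂ ^ b.2 *
            (logKernel a.1 b.1 x.1 * logKernel a.2 b.2 x.2) := by
        rw [integral_finsetSum _ fun a _ => integrable_finsetSum _ fun b _ => hint a b]
        exact sum_congr rfl fun a _ => integral_finsetSum _ fun b _ => hint a b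
    _ = _ := by simp only [integral_const_mul, integral_logKernel_mul_logKernel]
end
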